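/- Let α ∈ W₊^{p×p}, β ∈ W₊^{p×q}, γ ∈ W₋^{q×p}, δ ∈ W₋^{q×q}, and assume the zeroth Fourier coefficients a₀ = α₀ and d₀ = δ₀ are invertible matrices. Then the discrete twofold Ellis–Gohberg inverse problem for {α, β, γ, δ} has a solution if and only if (D1) α*α − γ*γ = a₀, δ*δ − β*β = d₀ and α*β = γ*δ (as functions on the unit circle, the right-hand sides being constant), and (D2) the operators R₁₁ and R₂₂ are injective. In that case R₁₁ and R₂₂ are invertible, the solution g is unique, and g = −R₁₁⁻¹β and g* = −R₂₂⁻¹γ (the operators being applied columnwise to the matrix functions β and γ). -/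

import Mathlib

/-!
The Wiener algebra is encoded as `ℓ¹(ℤ)` with convolution (`Wien`), a commutative Banach algebra
with involution, and the matrix functions as matrices over it.

Put `X = a₀⁻¹ α*`, `V = a₀⁻¹ γ*`, `Y = d₀⁻¹ β*`, `U = d₀⁻¹ δ*`. Condition (D1) says that the block
matrix with rows `(X, -V)`, `(-Y, U)` is a left inverse of the block matrix with rows `(α, β)`,
`(γ, δ)`; over a commutative ring it is then also a right inverse (`core_of_D1`, structure `Core`).
Besides `R₁₁` and `R₂₂` consider `R₁₂ f = α P_{≥0}(V f) - β P_{≥1}(U f)` and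
`R₂₁ f = δ P_{≤0}(Y f) - γ P_{≤-1}(X f)`. Everything about `R₂₂` is deduced from `R₁₁` by the
reflection `z ↦ z⁻¹`, which exchanges the roles of `(α, β)` and `(δ, γ)` (`Core.mirror`,
`Sol.mirror`).

Sufficiency. Since `α X - β Y = 1`, the operator `R₁₁` is the identity plus a sum of products with
Hankel operators; Hankel operators with symbol in the Wiener algebra are norm limits of finite rank
operators, hence compact, and the Fredholm alternative makes injectivity imply surjectivity
(`Core.surj_of_inj`). Let `g = -R₁₁⁻¹ β`. The identity `R₁₁ R₁₂ = R₁₂ R₂₂` (`Core.square12`) and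
the shift relation `R₁₁ S₊* R₁₂ = R₁₂ S₋ R₂₂` (`Core.shift`), where `S₊*` and `S₋` are multiplication
by `z⁻¹` compressed to `W₊` and `W₋`, show by induction on monomials and continuity that
`-R₁₁⁻¹ R₁₂` is the Hankel operator with symbol `g` (`Core.hankel`). Applying this to `γ = R₂₁ 1`
and `δ = R₂₂ 1` gives two of the four inclusions (`Core.half_sol`); reflection gives the other two
for `k = -R₂₂⁻¹ γ`. That `k = g*` follows from the duality between `R₁₂` and `R₂₁` under the pairing
`(A* B)₀` (`Core.adjoint_eq`).

Necessity. For a solution `g` the functions in (D1) have one-sided support on both sides, which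
yields (D1) (`Sol.D1`). Moreover `R₂₁ = -P_{≤0} g* R₁₁` and `R₁₁ + P_{≥0} g R₂₁ = 1` on `W₊`
(`Core.sol_R21`, `Core.sol_R11`), so `R₁₁` is injective, hence bijective, and evaluating on
`R₁₁⁻¹ β` gives `R₁₁ g = -β` (`Core.sol_eq`). Uniqueness of `g` is then injectivity of `R₁₁`.
-/

open Matrix

noncomputable section

/-- Fourier coefficient sequences of matrix functions in the Wiener algebra. -/
abbrev ZM (r s : ℕ) := ℤ → Matrix (Fin r) (Fin s) ℂ

/-- Fourier coefficient sequences of vector functions in the Wiener algebra. -/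
abbrev ZV (n : ℕ) := ℤ → Fin n → ℂ

/-- Absolute summability of the Fourier coefficients (membership in `W^{r×s}`). -/
def zl1M {r s : ℕ} (φ : ZM r s) : Prop := ∀ i j, Summable fun l => ‖φ l i j‖

/-- Absolute summability of the Fourier coefficients (membership in `Wⁿ`). -/
def zl1V {n : ℕ} (f : ZV n) : Prop := ∀ i, Summable fun l => ‖f l i‖

/-- Fourier coefficients of the product of two Wiener functions. -/
def zconvM {r s u : ℕ} (φ : ZM r s) (ψ : ZM s u) : ZM r u :=
  fun j => Matrix.of fun i k => ∑' l : ℤ, (φ l * ψ (j - l)) i k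

/-- Fourier coefficients of a matrix Wiener function applied to a vector Wiener function. -/
def zconvV {r s : ℕ} (φ : ZM r s) (f : ZV s) : ZV r :=
  fun j i => ∑' l : ℤ, (φ l).mulVec (f (j - l)) i

/-- Fourier coefficients of `φ*`, `φ*(ζ) = φ(ζ)*`. -/
def zadj {r s : ℕ} (φ : ZM r s) : ZM s r := fun j => (φ (-j))ᴴ

/-- Projection retaining the Fourier coefficients of index `≥ k`. -/
def Pge {n : ℕ} (k : ℤ) (f : ZV n) : ZV n := fun j => if k ≤ j then f j else 0

/-- Projection retaining the Fourier coefficients of index `≤ k`. -/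
def Ple {n : ℕ} (k : ℤ) (f : ZV n) : ZV n := fun j => if j ≤ k then f j else 0

/-- Multiplication by a constant matrix. -/
def cmul {n m : ℕ} (c : Matrix (Fin n) (Fin m) ℂ) (f : ZV m) : ZV n := fun j => c.mulVec (f j)

/-- `W₊ⁿ`: summable coefficients supported on `j ≥ 0`. -/
def WPlus (n : ℕ) : Set (ZV n) := {f | zl1V f ∧ ∀ j < 0, f j = 0}

/-- `W₋ⁿ`: summable coefficients supported on `j ≤ 0`. -/
def WMinus (n : ℕ) : Set (ZV n) := {f | zl1V f ∧ ∀ j > 0, f j = 0}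

/-- The operator `R₁₁ f = P_{≥0}(α a₀⁻¹ P_{≥0}(α* f)) − P_{≥0}(β d₀⁻¹ P_{≥1}(β* f))`. -/
def R11 {p q : ℕ} (α : ZM p p) (β : ZM p q) (a₀ : Matrix (Fin p) (Fin p) ℂ)
    (d₀ : Matrix (Fin q) (Fin q) ℂ) (f : ZV p) : ZV p :=
  Pge 0 (zconvV α (cmul a₀⁻¹ (Pge 0 (zconvV (zadj α) f)))) -
    Pge 0 (zconvV β (cmul d₀⁻¹ (Pge 1 (zconvV (zadj β) f))))

/-- The operator `R₂₂ f = P_{≤0}(δ d₀⁻¹ P_{≤0}(δ* f)) − P_{≤0}(γ a₀⁻¹ P_{≤−1}(γ* f))`. -/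
def R22 {p q : ℕ} (γ : ZM q p) (δ : ZM q q) (a₀ : Matrix (Fin p) (Fin p) ℂ)
    (d₀ : Matrix (Fin q) (Fin q) ℂ) (f : ZV q) : ZV q :=
  Ple 0 (zconvV δ (cmul d₀⁻¹ (Ple 0 (zconvV (zadj δ) f)))) -
    Ple 0 (zconvV γ (cmul a₀⁻¹ (Ple (-1) (zconvV (zadj γ) f))))

/-- Fourier coefficients of the constant function `e_n`. -/
def eCoeff (n : ℕ) : ZM n n := fun j => if j = 0 then 1 else 0

/-- `g` is a solution of the discrete twofold Ellis–Gohberg inverse problem for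
`{α, β, γ, δ}`, written in terms of Fourier coefficients. -/
def DEGSol {p q : ℕ} (α : ZM p p) (β : ZM p q) (γ : ZM q p) (δ : ZM q q) (g : ZM p q) :
    Prop :=
  (∀ j : ℤ, 0 ≤ j → α j + zconvM g γ j - eCoeff p j = 0) ∧
  (∀ j : ℤ, j ≤ 0 → zconvM (zadj g) α j + γ j = 0) ∧
  (∀ j : ℤ, 0 ≤ j → zconvM g δ j + β j = 0) ∧
  (∀ j : ℤ, j ≤ 0 → δ j + zconvM (zadj g) β j - eCoeff q j = 0)

/-- Condition (D1): `α*α − γ*γ = a₀`, `δ*δ − β*β = d₀`, `α*β = γ*δ`. -/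
def CondD1 {p q : ℕ} (α : ZM p p) (β : ZM p q) (γ : ZM q p) (δ : ZM q q) : Prop :=
  (∀ j : ℤ, zconvM (zadj α) α j - zconvM (zadj γ) γ j = if j = 0 then α 0 else 0) ∧
  (∀ j : ℤ, zconvM (zadj δ) δ j - zconvM (zadj β) β j = if j = 0 then δ 0 else 0) ∧
  (∀ j : ℤ, zconvM (zadj α) β j = zconvM (zadj γ) δ j)

set_option linter.unusedSectionVars false

/-! ### The Wiener algebra as a Banach algebra -/

/-- The Wiener algebra, encoded as `ℓ¹(ℤ)` with convolution: an element is the absolutely summable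
sequence of Fourier coefficients of a function on the unit circle. -/
def Wien : Type := lp (fun _ : ℤ => ℂ) 1

namespace Wien

instance : NormedAddCommGroup Wien := inferInstanceAs (NormedAddCommGroup (lp (fun _ : ℤ => ℂ) 1))
instance : NormedSpace ℂ Wien := inferInstanceAs (NormedSpace ℂ (lp (fun _ : ℤ => ℂ) 1))
instance : CompleteSpace Wien := inferInstanceAs (CompleteSpace (lp (fun _ : ℤ => ℂ) 1))

/-- The `j`-th Fourier coefficient. -/
def cf (f : Wien) (j : ℤ) : ℂ := (show lp (fun _ : ℤ => ℂ) 1 from f).1 j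

theorem ext {f g : Wien} (h : ∀ j, cf f j = cf g j) : f = g := lp.ext (funext h)

theorem summ (f : Wien) : Summable fun j => ‖cf f j‖ := by
  have := (lp.memℓp (show lp (fun _ : ℤ => ℂ) 1 from f)).summable (by simp)
  simpa using! this

/-- The Wiener function with prescribed absolutely summable coefficients. -/
def ofS (f : ℤ → ℂ) (h : Summable fun j => ‖f j‖) : Wien :=
  (⟨f, memℓp_gen (by simpa using h)⟩ : lp (fun _ : ℤ => ℂ) 1)

@[simp] theorem cf_ofS (f : ℤ → ℂ) (h) (j : ℤ) : cf (ofS f h) j = f j := rfl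

theorem norm_eq (f : Wien) : ‖f‖ = ∑' j, ‖cf f j‖ := by
  have := lp.norm_eq_tsum_rpow (p := 1) (by simp) (show lp (fun _ : ℤ => ℂ) 1 from f)
  simpa using! this

theorem norm_cf_le (f : Wien) (j : ℤ) : ‖cf f j‖ ≤ ‖f‖ :=
  lp.norm_apply_le_norm (by simp) (show lp (fun _ : ℤ => ℂ) 1 from f) j

@[simp] theorem cf_zero (j : ℤ) : cf 0 j = 0 := rfl
@[simp] theorem cf_add (f g : Wien) (j : ℤ) : cf (f + g) j = cf f j + cf g j := rfl
@[simp] theorem cf_neg (f : Wien) (j : ℤ) : cf (-f) j = -cf f j := rfl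
@[simp] theorem cf_sub (f g : Wien) (j : ℤ) : cf (f - g) j = cf f j - cf g j := rfl
@[simp] theorem cf_smul (c : ℂ) (f : Wien) (j : ℤ) : cf (c • f) j = c * cf f j := rfl

/-- The coefficient functional as an additive map. -/
def cfHom (j : ℤ) : Wien →+ ℂ where
  toFun f := cf f j
  map_zero' := rfl
  map_add' _ _ := rfl

@[simp] theorem cf_sum {ι : Type*} (s : Finset ι) (f : ι → Wien) (j : ℤ) :
    cf (∑ i ∈ s, f i) j = ∑ i ∈ s, cf (f i) j := map_sum (cfHom j) f s

/-- The shear `(j, l) ↦ (l, j - l)` of `ℤ × ℤ`. -/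
def shear : ℤ × ℤ ≃ ℤ × ℤ where
  toFun x := (x.2, x.1 - x.2)
  invFun x := (x.1 + x.2, x.1)
  left_inv x := by ext <;> simp
  right_inv x := by ext <;> simp

theorem summ_shear {f g : ℤ → ℂ} (hf : Summable fun j => ‖f j‖) (hg : Summable fun j => ‖g j‖) :
    Summable fun x : ℤ × ℤ => ‖f x.2 * g (x.1 - x.2)‖ := by
  have h := hf.mul_of_nonneg hg (fun _ => norm_nonneg _) (fun _ => norm_nonneg _)
  have h2 := (shear.summable_iff (f := fun x : ℤ × ℤ => ‖f x.1‖ * ‖g x.2‖)).2 h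
  simpa [shear, Function.comp_def] using h2

theorem summ_conv {f g : ℤ → ℂ} (hf : Summable fun j => ‖f j‖) (hg : Summable fun j => ‖g j‖)
    (j : ℤ) : Summable fun l => ‖f l * g (j - l)‖ :=
  (summ_shear hf hg).prod_factor j

theorem summ_tsum {f g : ℤ → ℂ} (hf : Summable fun j => ‖f j‖) (hg : Summable fun j => ‖g j‖) :
    Summable fun j => ‖∑' l, f l * g (j - l)‖ :=
  Summable.of_nonneg_of_le (fun _ => norm_nonneg _)
    (fun j => norm_tsum_le_tsum_norm (summ_conv hf hg j)) (summ_shear hf hg).prod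

instance : Mul Wien := ⟨fun f g => ofS (fun j => ∑' l, cf f l * cf g (j - l))
  (summ_tsum f.summ g.summ)⟩

theorem cf_mul (f g : Wien) (j : ℤ) : cf (f * g) j = ∑' l, cf f l * cf g (j - l) := rfl

/-- The monomial `c z^n`. -/
def mon (n : ℤ) (c : ℂ) : Wien := (lp.single 1 n c : lp (fun _ : ℤ => ℂ) 1)

theorem cf_mon (n : ℤ) (c : ℂ) (j : ℤ) : cf (mon n c) j = if j = n then c else 0 := by
  have := lp.single_apply (E := fun _ : ℤ => ℂ) 1 n c j
  refine Eq.trans this ?_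
  simp [Pi.single_apply]

theorem hasSum_mon (f : Wien) : HasSum (fun j => mon j (cf f j)) f :=
  lp.hasSum_single (by simp) (show lp (fun _ : ℤ => ℂ) 1 from f)

theorem cf_mon_mul (n : ℤ) (c : ℂ) (f : Wien) (j : ℤ) : cf (mon n c * f) j = c * cf f (j - n) := by
  rw [cf_mul, tsum_eq_single n]
  · simp [cf_mon]
  · intro l hl; simp [cf_mon, hl]

instance : One Wien := ⟨mon 0 1⟩

theorem one_def : (1 : Wien) = mon 0 1 := rfl

theorem cf_one (j : ℤ) : cf 1 j = if j = 0 then 1 else 0 := cf_mon 0 1 j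

protected theorem mul_comm' (f g : Wien) : f * g = g * f := by
  refine ext fun j => ?_
  rw [cf_mul, cf_mul, ← (Equiv.subLeft j).tsum_eq]
  exact tsum_congr fun l => by simp [mul_comm]

protected theorem mul_add' (f g h : Wien) : f * (g + h) = f * g + f * h := by
  refine ext fun j => ?_
  simp only [cf_mul, cf_add, mul_add]
  exact (summ_conv f.summ g.summ j).of_norm.tsum_add (summ_conv f.summ h.summ j).of_norm

protected theorem mul_assoc' (f g h : Wien) : f * g * h = f * (g * h) := by
  refine ext fun j => ?_
  simp only [cf_mul, ← tsum_mul_left, ← tsum_mul_right]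
  have hs : Summable fun x : ℤ × ℤ => cf f x.2 * cf g (x.1 - x.2) * cf h (j - x.1) := by
    refine Summable.of_norm_bounded ((summ_shear f.summ g.summ).mul_right ‖h‖) fun x => ?_
    rw [norm_mul]
    exact mul_le_mul_of_nonneg_left (norm_cf_le _ _) (norm_nonneg _)
  rw [Summable.tsum_comm (f := fun m l => cf f m * cf g (l - m) * cf h (j - l))
    ((Equiv.prodComm ℤ ℤ).summable_iff.2 hs)]
  refine tsum_congr fun m => ?_
  rw [← (Equiv.addRight m).tsum_eq]
  refine tsum_congr fun n => ?_
  simp only [Equiv.coe_addRight, add_sub_cancel_right, mul_assoc]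
  congr 3; ring

protected theorem norm_mul_le' (f g : Wien) : ‖f * g‖ ≤ ‖f‖ * ‖g‖ := by
  rw [norm_eq, norm_eq f, norm_eq g]
  have h1 := summ_shear f.summ g.summ
  have h := f.summ.mul_of_nonneg g.summ (fun _ => norm_nonneg _) (fun _ => norm_nonneg _)
  calc ∑' j, ‖cf (f * g) j‖ ≤ ∑' j, ∑' l, ‖cf f l * cf g (j - l)‖ :=
        (f * g).summ.tsum_le_tsum (fun j => norm_tsum_le_tsum_norm (summ_conv f.summ g.summ j))
          h1.prod
    _ = ∑' x : ℤ × ℤ, ‖cf f x.2 * cf g (x.1 - x.2)‖ := (h1.tsum_prod).symm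
    _ = ∑' x : ℤ × ℤ, ‖cf f x.1‖ * ‖cf g x.2‖ := by
        rw [← shear.tsum_eq fun x : ℤ × ℤ => ‖cf f x.1‖ * ‖cf g x.2‖]
        exact tsum_congr fun x => by simp [shear]
    _ = _ := (f.summ.tsum_mul_tsum g.summ h).symm

instance : CommRing Wien :=
  { (inferInstance : AddCommGroup Wien) with
    mul := (· * ·)
    one := 1
    mul_comm := Wien.mul_comm'
    mul_assoc := Wien.mul_assoc'
    left_distrib := Wien.mul_add'
    right_distrib := fun a b c => by
      rw [Wien.mul_comm', Wien.mul_add', Wien.mul_comm' c a, Wien.mul_comm' c b]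
    zero_mul := fun a => ext fun j => by simp [cf_mul]
    mul_zero := fun a => ext fun j => by simp [cf_mul]
    one_mul := fun a => ext fun j => by rw [one_def, cf_mon_mul]; simp
    mul_one := fun a => ext fun j => by rw [Wien.mul_comm', one_def, cf_mon_mul]; simp }

instance : NormedCommRing Wien :=
  { (inferInstance : CommRing Wien), (inferInstance : NormedAddCommGroup Wien) with
    norm_mul_le := Wien.norm_mul_le' }

theorem smul_eq_mon_mul (c : ℂ) (f : Wien) : c • f = mon 0 c * f :=
  ext fun j => by rw [cf_mon_mul]; simp

/-- Constants, as a ring homomorphism `ℂ → W`. -/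
def constHom : ℂ →+* Wien where
  toFun c := mon 0 c
  map_one' := rfl
  map_zero' := ext fun j => by simp [cf_mon]
  map_mul' a b := ext fun j => by rw [cf_mon_mul]; simp [cf_mon]
  map_add' a b := ext fun j => by simp [cf_mon]; split_ifs <;> simp

theorem cf_constHom_mul (c : ℂ) (f : Wien) (j : ℤ) : cf (constHom c * f) j = c * cf f j := by
  refine (cf_mon_mul 0 c f j).trans (by simp)

theorem cf_constHom (c : ℂ) (j : ℤ) : cf (constHom c) j = if j = 0 then c else 0 := cf_mon 0 c j

instance : NormedAlgebra ℂ Wien where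
  algebraMap := constHom
  commutes' _ _ := mul_comm _ _
  smul_def' := smul_eq_mon_mul
  norm_smul_le := norm_smul_le

instance : StarRing Wien where
  star f := ofS (fun j => star (cf f (-j))) (by
    simpa [Function.comp_def] using ((Equiv.neg ℤ).summable_iff (f := fun j => ‖cf f j‖)).2 f.summ)
  star_involutive f := ext fun j => by simp
  star_mul f g := ext fun j => by
    simp only [cf_ofS, cf_mul, tsum_star, star_mul]
    rw [← (Equiv.subRight j).tsum_eq]
    exact tsum_congr fun l => by simp; left; congr 2; ring
  star_add f g := ext fun j => by simp

theorem cf_star (f : Wien) (j : ℤ) : cf (star f) j = star (cf f (-j)) := rfl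

/-- The reflection `z ↦ z⁻¹`, a ring involution. -/
def refl : Wien →+* Wien where
  toFun f := ofS (fun j => cf f (-j)) (by
    simpa [Function.comp_def] using ((Equiv.neg ℤ).summable_iff (f := fun j => ‖cf f j‖)).2 f.summ)
  map_one' := ext fun j => by simp [cf_one]
  map_zero' := ext fun j => by simp
  map_add' f g := ext fun j => by simp
  map_mul' f g := ext fun j => by
    simp only [cf_ofS, cf_mul]
    rw [← (Equiv.neg ℤ).tsum_eq]
    exact tsum_congr fun l => by simp; left; congr 1; ring

theorem cf_refl (f : Wien) (j : ℤ) : cf (refl f) j = cf f (-j) := rfl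

/-- The Riesz projection `P_{≥k}`. -/
def proj (k : ℤ) : Wien →L[ℂ] Wien :=
  LinearMap.mkContinuous
    { toFun := fun f => ofS (fun j => if k ≤ j then cf f j else 0)
        (Summable.of_nonneg_of_le (fun _ => norm_nonneg _)
          (fun j => by split_ifs <;> simp) f.summ)
      map_add' := fun f g => ext fun j => by simp; split_ifs <;> simp
      map_smul' := fun c f => ext fun j => by simp } 1 (fun f => by
        rw [one_mul, norm_eq, norm_eq]
        exact Summable.tsum_le_tsum (fun j => by simp; split_ifs <;> simp) (summ _) f.summ)

theorem cf_proj (k : ℤ) (f : Wien) (j : ℤ) : cf (proj k f) j = if k ≤ j then cf f j else 0 := rfl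

end Wien

/-! ### Matrices over the Wiener algebra -/

namespace Wien

variable {m n o : Type}

/-- All coefficients of index `< k` vanish. -/
def GE {m n : Type} (k : ℤ) (F : Matrix m n Wien) : Prop := ∀ i j, ∀ l < k, cf (F i j) l = 0

/-- All coefficients of index `> k` vanish. -/
def LE {m n : Type} (k : ℤ) (F : Matrix m n Wien) : Prop := ∀ i j, ∀ l > k, cf (F i j) l = 0

/-- The projection `P_{≥k}` applied entrywise. -/
def PG {m n : Type} (k : ℤ) (F : Matrix m n Wien) : Matrix m n Wien := F.map (proj k)

/-- A constant matrix function. -/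
def Cn {m n : Type} (c : Matrix m n ℂ) : Matrix m n Wien := c.map constHom

/-- The monomial `z^k`. -/
def zp (k : ℤ) : Wien := mon k 1

/-- The zeroth Fourier coefficient of a matrix function. -/
def c0 {m n : Type} (F : Matrix m n Wien) : Matrix m n ℂ := F.map fun w => cf w 0

/-- Reflection `z ↦ z⁻¹` of a matrix function. -/
def Rf {m n : Type} (F : Matrix m n Wien) : Matrix m n Wien := F.map refl

theorem mext {F G : Matrix m n Wien} (h : ∀ i j l, cf (F i j) l = cf (G i j) l) : F = G :=
  Matrix.ext fun i j => ext (h i j)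

section

variable {k l : ℤ} {F G : Matrix m n Wien}

theorem GE.add (hF : GE k F) (hG : GE k G) : GE k (F + G) := fun i j l h => by
  simp [hF i j l h, hG i j l h]
theorem GE.sub (hF : GE k F) (hG : GE k G) : GE k (F - G) := fun i j l h => by
  simp [hF i j l h, hG i j l h]
theorem GE.neg (hF : GE k F) : GE k (-F) := fun i j l h => by simp [hF i j l h]
theorem LE.add (hF : LE k F) (hG : LE k G) : LE k (F + G) := fun i j l h => by
  simp [hF i j l h, hG i j l h]
theorem LE.sub (hF : LE k F) (hG : LE k G) : LE k (F - G) := fun i j l h => by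
  simp [hF i j l h, hG i j l h]
theorem LE.neg (hF : LE k F) : LE k (-F) := fun i j l h => by simp [hF i j l h]
theorem GE.mono (hF : GE k F) (h : l ≤ k) : GE l F := fun i j a ha => hF i j a (by omega)
theorem LE.mono (hF : LE k F) (h : k ≤ l) : LE l F := fun i j a ha => hF i j a (by omega)

theorem GE.ct (hF : GE k F) (h : l = -k) : LE l Fᴴ := fun i j a ha => by
  simp [conjTranspose_apply, cf_star, hF j i (-a) (by omega)]
theorem LE.ct (hF : LE k F) (h : l = -k) : GE l Fᴴ := fun i j a ha => by
  simp [conjTranspose_apply, cf_star, hF j i (-a) (by omega)]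
theorem GE.rf (hF : GE k F) (h : l = -k) : LE l (Rf F) := fun i j a ha => by
  simp [Rf, cf_refl, hF i j (-a) (by omega)]
theorem LE.rf (hF : LE k F) (h : l = -k) : GE l (Rf F) := fun i j a ha => by
  simp [Rf, cf_refl, hF i j (-a) (by omega)]

theorem GE.zp (hF : GE k F) {a b : ℤ} (h : b = k + a) : GE b (zp a • F) := fun i j l hl => by
  simp [Wien.zp, cf_mon_mul, hF i j (l - a) (by omega)]
theorem LE.zp (hF : LE k F) {a b : ℤ} (h : b = k + a) : LE b (zp a • F) := fun i j l hl => by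
  simp [Wien.zp, cf_mon_mul, hF i j (l - a) (by omega)]

theorem cf_PG (k : ℤ) (F : Matrix m n Wien) (i j l) :
    cf (PG k F i j) l = if k ≤ l then cf (F i j) l else 0 := rfl

theorem PG_add (k : ℤ) (F G : Matrix m n Wien) : PG k (F + G) = PG k F + PG k G := by
  ext1 i j; simp [PG]
theorem PG_sub (k : ℤ) (F G : Matrix m n Wien) : PG k (F - G) = PG k F - PG k G := by
  ext1 i j; simp [PG]
theorem PG_neg (k : ℤ) (F : Matrix m n Wien) : PG k (-F) = -PG k F := by
  ext1 i j; simp [PG]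

theorem GE_PG (k : ℤ) (F : Matrix m n Wien) : GE k (PG k F) := fun i j l hl => by
  rw [cf_PG, if_neg (by omega)]
theorem LE_PG (k : ℤ) (F : Matrix m n Wien) {l : ℤ} (h : l = k - 1) : LE l (F - PG k F) :=
  fun i j l hl => by simp [cf_PG, show k ≤ l by omega]
theorem PG_of_GE (h : GE k F) : PG k F = F := mext fun i j l => by
  rw [cf_PG]; split_ifs with hl
  · rfl
  · rw [h i j l (by omega)]
theorem PG_of_LE (h : LE l F) (hl : l < k) : PG k F = 0 := mext fun i j a => by
  rw [cf_PG]; split_ifs with hl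
  · rw [h i j a (by omega)]; rfl
  · rfl

/-- Functions with the same coefficients of index `≥ k` have the same projection. -/
theorem PG_congr (h : LE l (F - G)) (hl : l < k) : PG k F = PG k G := by
  rw [← sub_eq_zero, ← PG_sub, PG_of_LE h hl]

theorem eq_zero_of_GE_LE (h : GE k F) (h' : LE l F) (hl : l < k) : F = 0 := by
  rw [← PG_of_GE h, PG_of_LE h' hl]

theorem PG_zp (F : Matrix m n Wien) {a b k : ℤ} (h : b = k + a) :
    PG b (zp a • F) = zp a • PG k F := mext fun i j l => by
  rw [cf_PG]
  simp only [Matrix.smul_apply, smul_eq_mul, zp, cf_mon_mul, cf_PG]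
  by_cases hb : b ≤ l
  · rw [if_pos hb, if_pos (by omega)]
  · rw [if_neg hb, if_neg (by omega)]; simp

theorem zp_zp (a b : ℤ) (F : Matrix m n Wien) : zp a • zp b • F = zp (a + b) • F := by
  rw [smul_smul]; congr 1
  refine ext fun j => ?_
  rw [zp, cf_mon_mul, zp, zp, cf_mon, cf_mon]
  by_cases h : j = a + b
  · rw [if_pos (by omega), if_pos h]; simp
  · rw [if_neg (by omega), if_neg h]; simp

theorem zp_zero (F : Matrix m n Wien) : zp 0 • F = F := one_smul _ _

theorem GE_Cn (c : Matrix m n ℂ) : GE 0 (Cn c) := fun i j l hl => by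
  simp [Cn, cf_constHom, hl.ne]
theorem LE_Cn (c : Matrix m n ℂ) : LE 0 (Cn c) := fun i j l hl => by
  simp [Cn, cf_constHom, hl.ne']

theorem c0_Cn (c : Matrix m n ℂ) : c0 (Cn c) = c := by
  ext; simp [c0, Cn, cf_constHom]
theorem c0_add (F G : Matrix m n Wien) : c0 (F + G) = c0 F + c0 G := by ext; simp [c0]
theorem c0_sub (F G : Matrix m n Wien) : c0 (F - G) = c0 F - c0 G := by ext; simp [c0]
theorem c0_neg (F : Matrix m n Wien) : c0 (-F) = -c0 F := by ext; simp [c0]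
theorem c0_of_GE (h : GE k F) (hk : 0 < k) : c0 F = 0 := by ext i j; simpa [c0] using h i j 0 hk
theorem c0_of_LE (h : LE k F) (hk : k < 0) : c0 F = 0 := by ext i j; simpa [c0] using h i j 0 hk
theorem c0_ct (F : Matrix m n Wien) : c0 Fᴴ = (c0 F)ᴴ := by
  ext i j; simp [c0, cf_star]

theorem Cn_ct (c : Matrix m n ℂ) : (Cn c)ᴴ = Cn cᴴ := mext fun i j l => by
  simp [Cn, cf_constHom, cf_star]; split_ifs <;> simp

theorem Rf_add (F G : Matrix m n Wien) : Rf (F + G) = Rf F + Rf G := by ext1; simp [Rf]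
theorem Rf_sub (F G : Matrix m n Wien) : Rf (F - G) = Rf F - Rf G := by ext1; simp [Rf]
theorem Rf_neg (F : Matrix m n Wien) : Rf (-F) = -Rf F := by ext1; simp [Rf]
theorem Rf_Rf (F : Matrix m n Wien) : Rf (Rf F) = F := mext fun i j l => by
  simp [Rf, cf_refl]
theorem Rf_ct (F : Matrix m n Wien) : (Rf F)ᴴ = Rf Fᴴ := mext fun i j l => by
  simp [Rf, cf_refl, cf_star]
theorem Rf_Cn (c : Matrix m n ℂ) : Rf (Cn c) = Cn c := mext fun i j l => by
  simp [Rf, cf_refl, Cn, cf_constHom]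
theorem Rf_inj (h : Rf F = Rf G) : F = G := by rw [← Rf_Rf F, h, Rf_Rf]

/-- Reflection turns `P_{≥1-k}` into `P_{≤k-1}`. -/
theorem PG_Rf (F : Matrix m n Wien) {k l : ℤ} (h : l = 1 - k) :
    PG l (Rf F) = Rf (F - PG k F) := mext fun i j a => by
  rw [cf_PG]
  simp only [Rf, Matrix.map_apply, cf_refl, Matrix.sub_apply, cf_sub, cf_PG]
  by_cases hb : l ≤ a
  · rw [if_pos hb, if_neg (by omega)]; simp
  · rw [if_neg hb, if_pos (by omega)]; simp

end

theorem cf_mul_apply [Fintype n] (F : Matrix m n Wien) (G : Matrix n o Wien) (i j) (l : ℤ) :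
    cf ((F * G) i j) l = ∑ x, ∑' a, cf (F i x) a * cf (G x j) (l - a) := by
  simp [Matrix.mul_apply, cf_mul]

theorem GE.mul [Fintype n] {k l a : ℤ} {F : Matrix m n Wien} {G : Matrix n o Wien}
    (hF : GE k F) (hG : GE l G) (h : a = k + l) : GE a (F * G) := fun i j b hb => by
  rw [cf_mul_apply]
  refine Finset.sum_eq_zero fun x _ => ?_
  rw [← tsum_zero]
  refine tsum_congr fun c => ?_
  by_cases hc : c < k
  · rw [hF i x c hc, zero_mul]
  · rw [hG x j (b - c) (by omega), mul_zero]

theorem LE.mul [Fintype n] {k l a : ℤ} {F : Matrix m n Wien} {G : Matrix n o Wien}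
    (hF : LE k F) (hG : LE l G) (h : a = k + l) : LE a (F * G) := fun i j b hb => by
  rw [cf_mul_apply]
  refine Finset.sum_eq_zero fun x _ => ?_
  rw [← tsum_zero]
  refine tsum_congr fun c => ?_
  by_cases hc : k < c
  · rw [hF i x c hc, zero_mul]
  · rw [hG x j (b - c) (by omega), mul_zero]

theorem Cn_mul [Fintype n] (a : Matrix m n ℂ) (b : Matrix n o ℂ) : Cn a * Cn b = Cn (a * b) :=
  (Matrix.map_mul (f := constHom)).symm

theorem Cn_one [DecidableEq m] : Cn (1 : Matrix m m ℂ) = 1 := by simp [Cn]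

theorem Rf_mul [Fintype n] (a : Matrix m n Wien) (b : Matrix n o Wien) : Rf (a * b) = Rf a * Rf b :=
  Matrix.map_mul (f := refl)

theorem Rf_one [DecidableEq m] : Rf (1 : Matrix m m Wien) = 1 := by simp [Rf]

theorem GE_one [DecidableEq m] : GE 0 (1 : Matrix m m Wien) := Cn_one (m := m) ▸ GE_Cn 1
theorem LE_one [DecidableEq m] : LE 0 (1 : Matrix m m Wien) := Cn_one (m := m) ▸ LE_Cn 1

theorem cf_Cn_mul [Fintype n] (c : Matrix m n ℂ) (F : Matrix n o Wien) (i j l) :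
    cf ((Cn c * F) i j) l = ∑ x, c i x * cf (F x j) l := by
  simp [Matrix.mul_apply, Cn, cf_constHom_mul]

theorem cf_mul_Cn [Fintype n] (F : Matrix m n Wien) (c : Matrix n o ℂ) (i j l) :
    cf ((F * Cn c) i j) l = ∑ x, c x j * cf (F i x) l := by
  simp [Matrix.mul_apply, Cn, mul_comm _ (constHom _), cf_constHom_mul]

theorem PG_Cn_mul [Fintype n] (k : ℤ) (c : Matrix m n ℂ) (F : Matrix n o Wien) :
    PG k (Cn c * F) = Cn c * PG k F := mext fun i j l => by
  rw [cf_PG, cf_Cn_mul, cf_Cn_mul]; simp only [cf_PG]; split_ifs <;> simp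

theorem PG_mul_Cn [Fintype n] (k : ℤ) (F : Matrix m n Wien) (c : Matrix n o ℂ) :
    PG k (F * Cn c) = PG k F * Cn c := mext fun i j l => by
  rw [cf_PG, cf_mul_Cn, cf_mul_Cn]; simp only [cf_PG]; split_ifs <;> simp

/-- `P_{≥k}` is self-adjoint for the pairing `⟨B, A⟩ = (A* B)₀`. -/
theorem c0_PG [Fintype m] (k : ℤ) (A : Matrix m n Wien) (B : Matrix m o Wien) :
    c0 (Aᴴ * PG k B) = c0 ((PG k A)ᴴ * B) := by
  have h1 : c0 ((A - PG k A)ᴴ * PG k B) = 0 :=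
    c0_of_GE (((LE_PG k A rfl).ct rfl).mul (GE_PG k B) rfl) (by omega)
  have h2 : c0 ((PG k A)ᴴ * (B - PG k B)) = 0 :=
    c0_of_LE (((GE_PG k A).ct rfl).mul (LE_PG k B rfl) rfl) (by omega)
  rw [conjTranspose_sub, Matrix.sub_mul, c0_sub, sub_eq_zero] at h1
  rw [Matrix.mul_sub, c0_sub, sub_eq_zero] at h2
  rw [h1, h2]

end Wien

/-! ### The block operator built from a pair of mutually inverse block matrices -/

namespace Wien

variable {p q ι : Type} [Fintype p] [Fintype q]

/-- `α P_{≥0} x - β P_{≥1} y`. With `X`, `V`, `Y`, `U` as in `Core`, `R₁₁ F = opP α β (X F) (Y F)` and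
`R₁₂ H = opP α β (V H) (U H)`. -/
def opP {p q ι : Type} [Fintype p] [Fintype q] (α : Matrix p p Wien) (β : Matrix p q Wien)
    (x : Matrix p ι Wien) (y : Matrix q ι Wien) : Matrix p ι Wien :=
  α * PG 0 x - β * PG 1 y

/-- `δ P_{≤0} y - γ P_{≤-1} x`. With `X`, `V`, `Y`, `U` as in `Core`, `R₂₁ F = opM γ δ (X F) (Y F)` and
`R₂₂ H = opM γ δ (V H) (U H)`. -/
def opM {p q ι : Type} [Fintype p] [Fintype q] (γ : Matrix q p Wien) (δ : Matrix q q Wien)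
    (x : Matrix p ι Wien) (y : Matrix q ι Wien) : Matrix q ι Wien :=
  δ * (y - PG 1 y) - γ * (x - PG 0 x)

theorem opP_add (α : Matrix p p Wien) (β : Matrix p q Wien)
    (x x' : Matrix p ι Wien) (y y' : Matrix q ι Wien) :
    opP α β (x + x') (y + y') = opP α β x y + opP α β x' y' := by
  simp only [opP, PG_add, Matrix.mul_add]; abel

theorem opP_sub (α : Matrix p p Wien) (β : Matrix p q Wien)
    (x x' : Matrix p ι Wien) (y y' : Matrix q ι Wien) :
    opP α β (x - x') (y - y') = opP α β x y - opP α β x' y' := by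
  simp only [opP, PG_sub, Matrix.mul_sub]; abel

theorem opP_neg (α : Matrix p p Wien) (β : Matrix p q Wien)
    (x : Matrix p ι Wien) (y : Matrix q ι Wien) :
    opP α β (-x) (-y) = -opP α β x y := by
  simp only [opP, PG_neg, Matrix.mul_neg]; abel

theorem opM_eq (γ : Matrix q p Wien) (δ : Matrix q q Wien)
    (x : Matrix p ι Wien) (y : Matrix q ι Wien) :
    opM γ δ x y = (δ * y - γ * x) + (γ * PG 0 x - δ * PG 1 y) := by
  simp only [opM, Matrix.mul_sub]; abel

/-- Reflection exchanges the two halves of the block operator. -/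
theorem opP_Rf (γ : Matrix q p Wien) (δ : Matrix q q Wien)
    (x : Matrix p ι Wien) (y : Matrix q ι Wien) :
    opP (Rf δ) (Rf γ) (Rf y) (Rf x) = Rf (opM γ δ x y) := by
  rw [opP, opM, PG_Rf y (k := 1) (by norm_num), PG_Rf x (k := 0) (by norm_num), ← Rf_mul,
    ← Rf_mul, ← Rf_sub]

theorem opM_Rf (α : Matrix p p Wien) (β : Matrix p q Wien)
    (x : Matrix p ι Wien) (y : Matrix q ι Wien) :
    opM (Rf β) (Rf α) (Rf y) (Rf x) = Rf (opP α β x y) := by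
  rw [opP, opM, PG_Rf y (k := 1) (by norm_num), PG_Rf x (k := 0) (by norm_num), ← Rf_sub,
    ← Rf_sub, sub_sub_cancel, sub_sub_cancel, ← Rf_mul, ← Rf_mul, ← Rf_sub]

variable [DecidableEq p] [DecidableEq q]

/-- The algebraic content of (D1): the block matrix with rows `(α, β)`, `(γ, δ)` is invertible with
inverse having rows `(X, -V)`, `(-Y, U)`, and all blocks satisfy the indicated support conditions.
In the application `X = a₀⁻¹ α*`, `V = a₀⁻¹ γ*`, `Y = d₀⁻¹ β*`, `U = d₀⁻¹ δ*`. -/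
structure Core (α : Matrix p p Wien) (β : Matrix p q Wien) (γ : Matrix q p Wien)
    (δ : Matrix q q Wien) (X : Matrix p p Wien) (V : Matrix p q Wien) (Y : Matrix q p Wien)
    (U : Matrix q q Wien) : Prop where
  hα : GE 0 α
  hβ : GE 0 β
  hγ : LE 0 γ
  hδ : LE 0 δ
  hX : LE (-1) (X - 1)
  hY : LE 0 Y
  hV : GE 0 V
  hU : GE 1 (U - 1)
  e1 : X * α - V * γ = 1
  e2 : U * δ - Y * β = 1
  e3 : X * β = V * δ
  e4 : Y * α = U * γ
  f1 : α * X - β * Y = 1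
  f2 : α * V = β * U
  f3 : γ * X = δ * Y
  f4 : δ * U - γ * V = 1

namespace Core

variable {α : Matrix p p Wien} {β : Matrix p q Wien} {γ : Matrix q p Wien}
    {δ : Matrix q q Wien} {X : Matrix p p Wien} {V : Matrix p q Wien} {Y : Matrix q p Wien}
    {U : Matrix q q Wien}

/-- The setting is invariant under the reflection `z ↦ z⁻¹`. -/
theorem mirror (h : Core α β γ δ X V Y U) :
    Core (Rf δ) (Rf γ) (Rf β) (Rf α) (Rf U) (Rf Y) (Rf V) (Rf X) where
  hα := h.hδ.rf (by norm_num)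
  hβ := h.hγ.rf (by norm_num)
  hγ := h.hβ.rf (by norm_num)
  hδ := h.hα.rf (by norm_num)
  hX := by rw [← Rf_one, ← Rf_sub]; exact h.hU.rf (by norm_num)
  hU := by rw [← Rf_one, ← Rf_sub]; exact h.hX.rf (by norm_num)
  hY := h.hV.rf (by norm_num)
  hV := h.hY.rf (by norm_num)
  e1 := by rw [← Rf_mul, ← Rf_mul, ← Rf_sub, h.e2, Rf_one]
  e2 := by rw [← Rf_mul, ← Rf_mul, ← Rf_sub, h.e1, Rf_one]
  e3 := by rw [← Rf_mul, ← Rf_mul, h.e4]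
  e4 := by rw [← Rf_mul, ← Rf_mul, h.e3]
  f1 := by rw [← Rf_mul, ← Rf_mul, ← Rf_sub, h.f4, Rf_one]
  f2 := by rw [← Rf_mul, ← Rf_mul, h.f3]
  f3 := by rw [← Rf_mul, ← Rf_mul, h.f2]
  f4 := by rw [← Rf_mul, ← Rf_mul, ← Rf_sub, h.f1, Rf_one]

theorem hX' (h : Core α β γ δ X V Y U) : LE 0 X := by
  have := (h.hX.mono (l := 0) (by norm_num)).add LE_one
  rwa [sub_add_cancel] at this

theorem GE_opP (h : Core α β γ δ X V Y U) (x : Matrix p ι Wien) (y : Matrix q ι Wien) :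
    GE 0 (opP α β x y) :=
  (h.hα.mul (GE_PG 0 x) rfl).sub ((h.hβ.mul (GE_PG 1 y) rfl).mono (by norm_num))

theorem LE_opM (h : Core α β γ δ X V Y U) (x : Matrix p ι Wien) (y : Matrix q ι Wien) :
    LE 0 (opM γ δ x y) :=
  (h.hδ.mul (LE_PG 1 y rfl) rfl).sub ((h.hγ.mul (LE_PG 0 x rfl) rfl).mono (by norm_num))

/-- Together with `comp2`: the inverse block matrix applied to the values of the block operator. -/
theorem comp1 (h : Core α β γ δ X V Y U) (x : Matrix p ι Wien) (y : Matrix q ι Wien) :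
    X * opP α β x y - V * opM γ δ x y = PG 0 x + V * (γ * x - δ * y) := by
  have e1 : X * α = 1 + V * γ := by rw [← h.e1]; abel
  simp only [opP, opM, Matrix.mul_sub, ← Matrix.mul_assoc, e1, h.e3, Matrix.add_mul, Matrix.one_mul]
  abel

theorem comp2 (h : Core α β γ δ X V Y U) (x : Matrix p ι Wien) (y : Matrix q ι Wien) :
    Y * opP α β x y - U * opM γ δ x y = PG 1 y + U * (γ * x - δ * y) := by
  have e2 : U * δ = 1 + Y * β := by rw [← h.e2]; abel
  simp only [opP, opM, Matrix.mul_sub, ← Matrix.mul_assoc, e2, h.e4, Matrix.add_mul, Matrix.one_mul]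
  abel

/-- With `R = (R_{ij})` the block operator and `J = diag(1, -1)`, the `(1,1)` entry of
`R J R = diag(R₁₁, -R₂₂)`. -/
theorem square11 (h : Core α β γ δ X V Y U) (F : Matrix p ι Wien) :
    opP α β (X * opP α β (X * F) (Y * F)) (Y * opP α β (X * F) (Y * F)) -
      opP α β (V * opM γ δ (X * F) (Y * F)) (U * opM γ δ (X * F) (Y * F)) =
      opP α β (X * F) (Y * F) := by
  rw [← opP_sub, h.comp1, h.comp2, ← Matrix.mul_assoc, ← Matrix.mul_assoc, h.f3, sub_self,
    Matrix.mul_zero, Matrix.mul_zero, add_zero, add_zero, opP, PG_of_GE (GE_PG _ _),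
    PG_of_GE (GE_PG _ _), opP]

theorem f4' (h : Core α β γ δ X V Y U) (H : Matrix q ι Wien) :
    γ * (V * H) - δ * (U * H) = -H := by
  rw [← neg_sub, ← Matrix.mul_assoc, ← Matrix.mul_assoc, ← Matrix.sub_mul, h.f4, Matrix.one_mul]

/-- The `(1,2)` entry of `R J R = diag(R₁₁, -R₂₂)`. -/
theorem square12 (h : Core α β γ δ X V Y U) (H : Matrix q ι Wien) :
    opP α β (X * opP α β (V * H) (U * H)) (Y * opP α β (V * H) (U * H)) =
      opP α β (V * opM γ δ (V * H) (U * H)) (U * opM γ δ (V * H) (U * H)) := by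
  rw [← sub_eq_zero, ← opP_sub, h.comp1, h.comp2, h.f4', Matrix.mul_neg, Matrix.mul_neg,
    ← sub_eq_add_neg, ← sub_eq_add_neg, opP, PG_sub, PG_sub, PG_of_GE (GE_PG _ _),
    PG_of_GE (GE_PG _ _), sub_self, sub_self, Matrix.mul_zero, Matrix.mul_zero, sub_zero]

/-- The shift relation `R₁₁ S₊* R₁₂ = R₁₂ S₋ R₂₂`, which forces `R₁₁⁻¹ R₁₂` to be a Hankel
operator. -/
theorem shift (h : Core α β γ δ X V Y U) (H : Matrix q ι Wien) (f : Matrix p ι Wien)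
    (e : Matrix q ι Wien) (hf : f = opP α β (V * H) (U * H)) (he : e = opM γ δ (V * H) (U * H)) :
    opP α β (X * PG 0 (zp (-1) • f)) (Y * PG 0 (zp (-1) • f)) =
      opP α β (V * zp (-1) • e) (U * zp (-1) • e) := by
  -- `c` is the zeroth coefficient of `R₁₂ H`, the part lost under the backward shift
  obtain ⟨c, hc⟩ : ∃ c, c = f - PG 1 f := ⟨_, rfl⟩
  have hcL : LE 0 c := hc ▸ LE_PG 1 f (by norm_num)
  have hP : PG 0 (zp (-1) • f) = zp (-1) • (f - c) := by
    rw [PG_zp f (k := 1) (by norm_num), hc, sub_sub_cancel]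
  have h1 : X * zp (-1) • (f - c) - V * zp (-1) • e =
      zp (-1) • (PG 0 (V * H) - V * H - X * c) := by
    have := h.comp1 (V * H) (U * H)
    rw [← hf, ← he, h.f4', Matrix.mul_neg] at this
    rw [Matrix.mul_smul, Matrix.mul_smul, ← smul_sub, Matrix.mul_sub, sub_right_comm, this]
    congr 1
  have h2 : Y * zp (-1) • (f - c) - U * zp (-1) • e =
      zp (-1) • (PG 1 (U * H) - U * H - Y * c) := by
    have := h.comp2 (V * H) (U * H)
    rw [← hf, ← he, h.f4', Matrix.mul_neg] at this
    rw [Matrix.mul_smul, Matrix.mul_smul, ← smul_sub, Matrix.mul_sub, sub_right_comm, this]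
    congr 1
  have l1 : LE 0 (PG 0 (V * H) - V * H - X * c) := by
    refine LE.sub ?_ (h.hX'.mul hcL rfl)
    rw [← neg_sub]
    exact ((LE_PG 0 _ rfl).mono (by norm_num)).neg
  have l2 : LE 0 (PG 1 (U * H) - U * H - Y * c) := by
    refine LE.sub ?_ (h.hY.mul hcL rfl)
    rw [← neg_sub]
    exact (LE_PG 1 _ (by norm_num)).neg
  rw [hP, ← sub_eq_zero, ← opP_sub, h1, h2, opP, PG_of_LE (l1.zp rfl) (by norm_num),
    PG_of_LE (l2.zp rfl) (by norm_num), Matrix.mul_zero, Matrix.mul_zero, sub_zero]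

theorem PG0_X (h : Core α β γ δ X V Y U) : PG 0 X = 1 := by
  rw [PG_congr h.hX (by norm_num), PG_of_GE GE_one]

theorem PG1_U (h : Core α β γ δ X V Y U) : PG 1 U = U - 1 := by
  have := PG_of_GE h.hU
  rwa [PG_sub, PG_of_LE LE_one (by norm_num), sub_zero] at this

theorem R11_one (h : Core α β γ δ X V Y U) : opP α β X Y = α := by
  rw [opP, h.PG0_X, PG_of_LE h.hY (by norm_num)]; simp

theorem R21_one (h : Core α β γ δ X V Y U) : opM γ δ X Y = γ := by
  rw [opM, h.PG0_X, PG_of_LE h.hY (by norm_num), sub_zero, Matrix.mul_sub, h.f3]; simp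

theorem R12_one (h : Core α β γ δ X V Y U) : opP α β V U = β := by
  rw [opP, h.PG1_U, PG_of_GE h.hV, Matrix.mul_sub, h.f2]; simp

theorem R22_one (h : Core α β γ δ X V Y U) : opM γ δ V U = δ := by
  rw [opM, h.PG1_U, PG_of_GE h.hV]; simp

/-- The Hankel operator `H_g` with symbol `g = -R₁₁⁻¹ β` satisfies `R₁₁ H_g = -R₁₂` on the monomials
`z⁻ⁿ`, `n ≥ 0`. -/
theorem hankel_mon (h : Core α β γ δ X V Y U)
    (inj : ∀ F : Matrix p q Wien, GE 0 F → opP α β (X * F) (Y * F) = 0 → F = 0)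
    (surj : ∀ H : Matrix q q Wien, LE 0 H → ∃ K : Matrix q q Wien, LE 0 K ∧
      opM γ δ (V * K) (U * K) = H)
    {g : Matrix p q Wien} (hg : GE 0 g) (hgβ : opP α β (X * g) (Y * g) = -β) (n : ℕ) :
    opP α β (X * PG 0 (zp (-n) • g)) (Y * PG 0 (zp (-n) • g)) =
      -opP α β (V * zp (-n) • (1 : Matrix q q Wien)) (U * zp (-n) • (1 : Matrix q q Wien)) := by
  induction n with
  | zero =>
    simp only [Nat.cast_zero, neg_zero, zp_zero, Matrix.mul_one, h.R12_one, PG_of_GE hg, hgβ]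
  | succ n ih =>
    obtain ⟨K, -, hK⟩ := surj (zp (-n) • (1 : Matrix q q Wien))
      ((LE_one.zp (b := -n) (by ring)).mono (by simp))
    have hF : PG 0 (zp (-n) • g) = -opP α β (V * K) (U * K) := by
      rw [← sub_eq_zero]
      apply inj
      · exact (GE_PG _ _).sub (h.GE_opP _ _).neg
      · rw [Matrix.mul_sub, Matrix.mul_sub, opP_sub, ih, Matrix.mul_neg, Matrix.mul_neg, opP_neg,
          h.square12, hK, sub_self]
    have hn : PG 0 (zp (-(n + 1 : ℕ)) • g) = -PG 0 (zp (-1) • opP α β (V * K) (U * K)) := by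
      have e : PG 0 (zp (-1) • (zp (-n) • g)) = PG 0 (zp (-1) • PG 0 (zp (-n) • g)) := by
        apply PG_congr (l := -2) _ (by norm_num)
        rw [← smul_sub]
        exact (LE_PG _ _ rfl).zp (by norm_num)
      rw [hF, smul_neg, PG_neg, zp_zp] at e
      rw [← e]
      congr 3
      push_cast
      ring
    rw [hn, Matrix.mul_neg, Matrix.mul_neg, opP_neg, h.shift K _ _ rfl rfl, hK, zp_zp]
    have : (-1 + -n : ℤ) = -(n + 1 : ℕ) := by push_cast; ring
    rw [this]

end Core
end Wien

/-! ### Hankel structure of `R₁₁⁻¹ R₁₂` and construction of a solution -/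

namespace Wien

variable {p q ι : Type}

theorem continuous_PG (k : ℤ) : Continuous (PG k : Matrix p ι Wien → Matrix p ι Wien) :=
  continuous_id.matrix_map (proj k).continuous

/-- Functions in `W₊` agree when all their nonnegative coefficients do. -/
theorem c0_zp_ext {F G : Matrix p ι Wien} (hF : GE 0 F) (hG : GE 0 G)
    (h : ∀ n : ℕ, c0 (zp (-n) • F) = c0 (zp (-n) • G)) : F = G := mext fun i j l => by
  rcases lt_or_ge l 0 with hl | hl
  · rw [hF i j l hl, hG i j l hl]
  · lift l to ℕ using hl
    have := congrFun (congrFun (h l) i) j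
    simpa [c0, zp, cf_mon_mul] using this

variable [Fintype p] [Fintype q]

theorem opP_mul_Cn {κ : Type} [Fintype ι] (α : Matrix p p Wien) (β : Matrix p q Wien)
    (x : Matrix p ι Wien) (y : Matrix q ι Wien) (c : Matrix ι κ ℂ) :
    opP α β (x * Cn c) (y * Cn c) = opP α β x y * Cn c := by
  simp only [opP, PG_mul_Cn, Matrix.sub_mul, Matrix.mul_assoc]

theorem hasSum_zp [DecidableEq q] (H : Matrix q ι Wien) :
    HasSum (fun j => (zp j • (1 : Matrix q q Wien)) * Cn (H.map fun w => cf w j)) H := by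
  refine Pi.hasSum.2 fun i => Pi.hasSum.2 fun k => ?_
  have e : (fun j => ((zp j • (1 : Matrix q q Wien)) * Cn (H.map fun w => cf w j)) i k) =
      fun j => mon j (cf (H i k) j) := funext fun j => ext fun l => by
    rw [Matrix.smul_mul, Matrix.one_mul]
    simp [Cn, zp, cf_mon_mul, cf_constHom, cf_mon, sub_eq_zero]
  rw [e]
  exact hasSum_mon (H i k)

theorem continuous_opP {T : Type*} [TopologicalSpace T] (α : Matrix p p Wien) (β : Matrix p q Wien)
    {x : T → Matrix p ι Wien} {y : T → Matrix q ι Wien} (hx : Continuous x) (hy : Continuous y) :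
    Continuous fun t => opP α β (x t) (y t) :=
  (continuous_const.matrix_mul ((continuous_PG 0).comp hx)).sub
    (continuous_const.matrix_mul ((continuous_PG 1).comp hy))

/-- The adjoint of `φ P_{≥k} a ψ*` is `ψ P_{≥k} a φ*` when `a` is Hermitian. -/
theorem dual {m n o κ ι : Type} [Fintype m] [Fintype n] [Fintype o] (k : ℤ) {a : Matrix n n ℂ}
    (ha : aᴴ = a) (φ : Matrix m n Wien) (ψ : Matrix o n Wien) (F : Matrix m κ Wien)
    (H : Matrix o ι Wien) :
    c0 (Fᴴ * (φ * PG k (Cn a * ψᴴ * H))) = c0 ((ψ * PG k (Cn a * φᴴ * F))ᴴ * H) := by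
  have e1 : Fᴴ * (φ * PG k (Cn a * ψᴴ * H)) = (Cn a * φᴴ * F)ᴴ * PG k (ψᴴ * H) := by
    rw [Matrix.mul_assoc (Cn a), PG_Cn_mul, conjTranspose_mul, conjTranspose_mul, Cn_ct, ha,
      conjTranspose_conjTranspose]
    simp only [Matrix.mul_assoc]
  rw [e1, c0_PG, conjTranspose_mul ψ, Matrix.mul_assoc (PG k _)ᴴ]

variable [DecidableEq p] [DecidableEq q]

namespace Core

variable {α : Matrix p p Wien} {β : Matrix p q Wien} {γ : Matrix q p Wien}
    {δ : Matrix q q Wien} {X : Matrix p p Wien} {V : Matrix p q Wien} {Y : Matrix q p Wien}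
    {U : Matrix q q Wien}

/-- The Hankel operator with symbol `g = -R₁₁⁻¹ β` is `-R₁₁⁻¹ R₁₂`. -/
theorem hankel (h : Core α β γ δ X V Y U)
    (inj : ∀ F : Matrix p q Wien, GE 0 F → opP α β (X * F) (Y * F) = 0 → F = 0)
    (surj : ∀ H : Matrix q q Wien, LE 0 H → ∃ K : Matrix q q Wien, LE 0 K ∧
      opM γ δ (V * K) (U * K) = H)
    {g : Matrix p q Wien} (hg : GE 0 g) (hgβ : opP α β (X * g) (Y * g) = -β)
    {H : Matrix q ι Wien} (hH : LE 0 H) :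
    opP α β (X * PG 0 (g * H)) (Y * PG 0 (g * H)) = -opP α β (V * H) (U * H) := by
  rw [eq_neg_iff_add_eq_zero]
  let Φ : Matrix q ι Wien →+ Matrix p ι Wien := AddMonoidHom.mk'
    (fun H => opP α β (X * PG 0 (g * H)) (Y * PG 0 (g * H)) + opP α β (V * H) (U * H))
    (fun A B => by simp only [Matrix.mul_add, PG_add, opP_add]; abel)
  have hΦ : Continuous Φ := by
    have hc : Continuous fun H : Matrix q ι Wien => PG 0 (g * H) :=
      (continuous_PG 0).comp (continuous_const.matrix_mul continuous_id)
    exact (continuous_opP α β (continuous_const.matrix_mul hc) (continuous_const.matrix_mul hc)).add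
      (continuous_opP α β (continuous_const.matrix_mul continuous_id)
        (continuous_const.matrix_mul continuous_id))
  have hs := (hasSum_zp H).map Φ hΦ
  refine hs.unique ?_
  convert hasSum_zero using 2 with j
  rcases le_or_gt j 0 with hj | hj
  · obtain ⟨n, rfl⟩ : ∃ n : ℕ, j = -n := ⟨(-j).toNat, by omega⟩
    have := h.hankel_mon inj surj hg hgβ n
    rw [eq_neg_iff_add_eq_zero] at this
    have key : ∀ c : Matrix q ι ℂ, Φ ((zp (-n) • (1 : Matrix q q Wien)) * Cn c) = 0 := by
      intro c
      change opP α β (X * PG 0 (g * ((zp (-n) • (1 : Matrix q q Wien)) * Cn c)))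
        (Y * PG 0 (g * ((zp (-n) • (1 : Matrix q q Wien)) * Cn c))) +
        opP α β (V * ((zp (-n) • (1 : Matrix q q Wien)) * Cn c))
          (U * ((zp (-n) • (1 : Matrix q q Wien)) * Cn c)) = 0
      rw [← Matrix.mul_assoc g, PG_mul_Cn, ← Matrix.mul_assoc X, ← Matrix.mul_assoc Y,
        ← Matrix.mul_assoc V, ← Matrix.mul_assoc U, opP_mul_Cn, opP_mul_Cn, ← Matrix.add_mul,
        Matrix.mul_smul g, Matrix.mul_one, this, Matrix.zero_mul]
    exact key _
  · have : Cn (H.map fun w => cf w j) = 0 := mext fun a b l => by simp [Cn, hH a b j hj]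
    simp only [Function.comp_apply, this, Matrix.mul_zero, map_zero]

/-- `g = -R₁₁⁻¹ β` satisfies the first and third equation of the inverse problem. -/
theorem half_sol (h : Core α β γ δ X V Y U)
    (inj : ∀ {ι : Type} (F : Matrix p ι Wien), GE 0 F → opP α β (X * F) (Y * F) = 0 → F = 0)
    (surj : ∀ {ι : Type} (H : Matrix q ι Wien), LE 0 H → ∃ K : Matrix q ι Wien, LE 0 K ∧
      opM γ δ (V * K) (U * K) = H)
    {g : Matrix p q Wien} (hg : GE 0 g) (hgβ : opP α β (X * g) (Y * g) = -β) :
    LE (-1) (α + g * γ - 1) ∧ LE (-1) (g * δ + β) := by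
  constructor
  · have h1 := h.hankel inj surj hg hgβ h.hγ
    have h2 := h.square11 (1 : Matrix p p Wien)
    rw [Matrix.mul_one, Matrix.mul_one, h.R11_one, h.R21_one] at h2
    have h3 : PG 0 (g * γ) - (1 - α) = 0 := by
      apply inj
      · exact (GE_PG _ _).sub (GE_one.sub h.hα)
      · rw [Matrix.mul_sub X, Matrix.mul_sub Y, Matrix.mul_sub X, Matrix.mul_sub Y, opP_sub,
          opP_sub, h1, Matrix.mul_one, Matrix.mul_one, h.R11_one]
        rw [← sub_eq_zero] at h2
        refine Eq.trans ?_ h2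
        abel
    have h4 := LE_PG 0 (g * γ) (l := -1) (by norm_num)
    rw [sub_eq_zero] at h3
    rw [h3] at h4
    convert h4 using 1
    abel
  · have h1 := h.hankel inj surj hg hgβ h.hδ
    have h2 := h.square12 (1 : Matrix q q Wien)
    rw [Matrix.mul_one, Matrix.mul_one, h.R12_one, h.R22_one] at h2
    have h3 : PG 0 (g * δ) + β = 0 := by
      apply inj
      · exact (GE_PG _ _).add h.hβ
      · rw [Matrix.mul_add, Matrix.mul_add, opP_add, h1, h2, neg_add_cancel]
    have h4 := LE_PG 0 (g * δ) (l := -1) (by norm_num)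
    rw [eq_neg_of_add_eq_zero_left h3] at h4
    rwa [sub_neg_eq_add] at h4

/-- `R₂₂ R₂₁ = R₂₁ R₁₁`. -/
theorem square21 (h : Core α β γ δ X V Y U) (F : Matrix p ι Wien) :
    opM γ δ (V * opM γ δ (X * F) (Y * F)) (U * opM γ δ (X * F) (Y * F)) =
      opM γ δ (X * opP α β (X * F) (Y * F)) (Y * opP α β (X * F) (Y * F)) := by
  have := h.mirror.square12 (Rf F)
  rw [← Rf_mul, ← Rf_mul, opP_Rf, opM_Rf, ← Rf_mul, ← Rf_mul, ← Rf_mul, ← Rf_mul, opP_Rf,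
    opP_Rf] at this
  exact Rf_inj this

/-- The functions `-R₁₁⁻¹ β` and `-R₂₂⁻¹ γ` are adjoint to each other. -/
theorem adjoint_eq (h : Core α β γ δ X V Y U) {a : Matrix p p ℂ} {d : Matrix q q ℂ}
    (ha : aᴴ = a) (hd : dᴴ = d) (hX : X = Cn a * αᴴ) (hV : V = Cn a * γᴴ) (hY : Y = Cn d * βᴴ)
    (hU : U = Cn d * δᴴ)
    (inj : ∀ {ι : Type} (F : Matrix p ι Wien), GE 0 F → opP α β (X * F) (Y * F) = 0 → F = 0)
    (inj' : ∀ {ι : Type} (F : Matrix q ι Wien), LE 0 F → opM γ δ (V * F) (U * F) = 0 → F = 0)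
    (surj : ∀ {ι : Type} (H : Matrix p ι Wien), GE 0 H → ∃ K : Matrix p ι Wien, GE 0 K ∧
      opP α β (X * K) (Y * K) = H)
    (surj' : ∀ {ι : Type} (H : Matrix q ι Wien), LE 0 H → ∃ K : Matrix q ι Wien, LE 0 K ∧
      opM γ δ (V * K) (U * K) = H)
    {g : Matrix p q Wien} (hg : GE 0 g) (hgβ : opP α β (X * g) (Y * g) = -β)
    {k : Matrix q p Wien} (hk : LE 0 k) (hkγ : opM γ δ (V * k) (U * k) = -γ) :
    k = gᴴ := by
  -- with `r = R₁₁⁻¹ 1`, `k = -R₂₁ r`, and pairing with `r` reads off the coefficients of `g`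
  obtain ⟨r, hr, hr1⟩ := surj (1 : Matrix p p Wien) GE_one
  have hkr : k = -opM γ δ (X * r) (Y * r) := by
    rw [eq_neg_iff_add_eq_zero]
    refine inj' _ (hk.add (h.LE_opM _ _)) ?_
    rw [Matrix.mul_add, Matrix.mul_add, opM_eq, PG_add, PG_add]
    have h1 := h.square21 r
    rw [hr1, Matrix.mul_one, Matrix.mul_one, h.R21_one, opM_eq] at h1
    rw [opM_eq] at hkγ
    have h2 := congrArg₂ (· + ·) hkγ h1
    simp only [neg_add_cancel] at h2
    rw [← h2]
    simp only [Matrix.mul_add]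
    abel
  have hS21 : opM γ δ (X * r) (Y * r) = γ * PG 0 (X * r) - δ * PG 1 (Y * r) := by
    rw [opM_eq, ← Matrix.mul_assoc, ← Matrix.mul_assoc, h.f3, sub_self, zero_add]
  have d11 : ∀ F : Matrix p q Wien, c0 (rᴴ * opP α β (X * F) (Y * F)) =
      c0 ((opP α β (X * r) (Y * r))ᴴ * F) := fun F => by
    rw [hX, hY, opP, opP, Matrix.mul_sub, c0_sub, dual 0 ha, dual 1 hd, ← c0_sub,
      conjTranspose_sub, Matrix.sub_mul]
  have d12 : ∀ H : Matrix q q Wien, c0 (rᴴ * opP α β (V * H) (U * H)) =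
      c0 ((opM γ δ (X * r) (Y * r))ᴴ * H) := fun H => by
    rw [hS21, hX, hY, hV, hU, opP, Matrix.mul_sub, c0_sub, dual 0 ha, dual 1 hd, ← c0_sub,
      conjTranspose_sub, Matrix.sub_mul]
  have : g = kᴴ := by
    refine c0_zp_ext hg (hk.ct (by norm_num)) fun n => ?_
    have h0 : c0 (zp (-n) • g) = c0 (PG 0 (zp (-n) • g)) := by
      ext i j; simp [c0, cf_PG]
    have h1 := d11 (PG 0 (zp (-n) • g))
    rw [h.hankel_mon inj surj' hg hgβ n, hr1, conjTranspose_one, Matrix.one_mul, Matrix.mul_neg,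
      c0_neg, d12, ← c0_neg, ← Matrix.neg_mul, ← conjTranspose_neg, ← hkr, Matrix.mul_smul,
      Matrix.mul_one] at h1
    rw [h0, h1]
  rw [this, conjTranspose_conjTranspose]

end Core
end Wien

/-! ### The Fredholm alternative for `R₁₁` -/

namespace Wien

/-- The coefficient functional `f ↦ f_j`. -/
def cfL (j : ℤ) : Wien →L[ℂ] ℂ :=
  LinearMap.mkContinuous
    { toFun := fun f => cf f j
      map_add' := fun _ _ => rfl
      map_smul' := fun _ _ => rfl } 1 fun f => by
    rw [one_mul]; exact norm_cf_le f j

theorem cfL_apply (j : ℤ) (f : Wien) : cfL j f = cf f j := rfl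

/-- The Hankel operator `f ↦ P_{≥0} (φ P_{<k} f)`, depending linearly and continuously on the
symbol `φ`. -/
def Ham (k : ℤ) : Wien →L[ℂ] Wien →L[ℂ] Wien :=
  ((ContinuousLinearMap.compL ℂ Wien Wien Wien (proj 0)).comp
    ((ContinuousLinearMap.compL ℂ Wien Wien Wien).flip (ContinuousLinearMap.id ℂ Wien - proj k))).comp
    (ContinuousLinearMap.mul ℂ Wien)

theorem Ham_apply (k : ℤ) (φ f : Wien) : Ham k φ f = proj 0 (φ * (f - proj k f)) := rfl

theorem compact_smulRight (L : Wien →L[ℂ] ℂ) (w : Wien) :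
    IsCompactOperator (L.smulRight w) :=
  (isCompactOperator_of_locallyCompactSpace_dom L).clm_comp (ContinuousLinearMap.toSpanSingleton ℂ w)

theorem compact_Ham_mon (k n : ℤ) (c : ℂ) : IsCompactOperator (Ham k (mon n c)) := by
  have : Ham k (mon n c) =
      ∑ j ∈ Finset.Ico 0 (n + k), (cfL (j - n)).smulRight (mon j c) := by
    refine ContinuousLinearMap.ext fun f => ext fun l => ?_
    rw [Ham_apply, cf_proj, cf_mon_mul, cf_sub, cf_proj, _root_.sum_apply, cf_sum]
    simp only [ContinuousLinearMap.smulRight_apply, cfL_apply, cf_smul, cf_mon, mul_ite, mul_zero,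
      Finset.sum_ite_eq, Finset.mem_Ico]
    by_cases h0 : 0 ≤ l <;> by_cases h1 : l < n + k
    · rw [if_pos h0, if_neg (by omega), if_pos ⟨h0, h1⟩]; ring
    · rw [if_pos h0, if_pos (by omega), if_neg (by omega)]; ring
    · rw [if_neg h0, if_neg (by omega)]
    · rw [if_neg h0, if_neg (by omega)]
  rw [this]
  exact sum_mem (S := compactOperator (RingHom.id ℂ) Wien Wien) fun j _ => compact_smulRight _ _

theorem compact_Ham (k : ℤ) (φ : Wien) : IsCompactOperator (Ham k φ) := by
  refine isCompactOperator_of_tendsto ((hasSum_mon φ).mapL (Ham k)) (.of_forall fun s => ?_)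
  exact sum_mem (S := compactOperator (RingHom.id ℂ) Wien Wien) fun j _ => compact_Ham_mon _ _ _

theorem inj_cols {p q : Type} [Fintype p] [Fintype q] {α : Matrix p p Wien} {β : Matrix p q Wien}
    {X : Matrix p p Wien} {Y : Matrix q p Wien}
    (inj : ∀ F : Matrix p Unit Wien, GE 0 F → opP α β (X * F) (Y * F) = 0 → F = 0)
    {ι : Type} (F : Matrix p ι Wien) (hF : GE 0 F) (h0 : opP α β (X * F) (Y * F) = 0) : F = 0 := by
  ext1 i j
  have := inj (F.submatrix id fun _ => j) (fun a b l hl => hF a j l hl) (by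
    ext1 a b; exact congrFun (congrFun h0 a) j)
  exact congrFun (congrFun this i) ()

variable {p q ι : Type} [Fintype p] [Fintype q] [DecidableEq p]

/-- The operator `f ↦ P_{≥0} (φ P_{<k} (ψ P_{≥0} f))` on column functions. -/
def HM (k : ℤ) (φ : Matrix p q Wien) (ψ : Matrix q p Wien) : (p → Wien) →L[ℂ] (p → Wien) :=
  ∑ i, ∑ j, ∑ l, (ContinuousLinearMap.single ℂ (fun _ : p => Wien) i).comp
    ((Ham k (φ i j)).comp ((ContinuousLinearMap.mul ℂ Wien (ψ j l)).comp
      ((proj 0).comp (ContinuousLinearMap.proj l))))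

theorem compact_HM (k : ℤ) (φ : Matrix p q Wien) (ψ : Matrix q p Wien) :
    IsCompactOperator (HM k φ ψ) := by
  have h : ∀ (A : Wien →L[ℂ] (p → Wien)) (B : (p → Wien) →L[ℂ] Wien) (φ : Wien),
      A.comp ((Ham k φ).comp B) ∈ compactOperator (RingHom.id ℂ) (p → Wien) (p → Wien) := by
    intro A B φ
    exact ((compact_Ham k φ).comp_clm B).clm_comp A
  exact sum_mem (S := compactOperator (RingHom.id ℂ) (p → Wien) (p → Wien)) fun i _ =>
    sum_mem fun j _ => sum_mem fun l _ => h _ _ _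

theorem HM_apply (k : ℤ) (φ : Matrix p q Wien) (ψ : Matrix q p Wien) (F : Matrix p Unit Wien)
    (i : p) : HM k φ ψ (fun a => F a ()) i =
      PG 0 (φ * (ψ * PG 0 F - PG k (ψ * PG 0 F))) i () := by
  simp only [HM, _root_.sum_apply, ContinuousLinearMap.comp_apply, Finset.sum_apply,
    ContinuousLinearMap.single_apply, PG, Matrix.map_apply, Matrix.mul_apply, Matrix.sub_apply,
    map_sum, Ham_apply, ContinuousLinearMap.mul_apply', ContinuousLinearMap.proj_apply, Pi.single_apply]
  rw [Finset.sum_eq_single i (by intro b _ hb; simp [hb.symm]) (by simp)]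
  simp only [if_true, ← map_sum, ← Finset.mul_sum, Finset.sum_sub_distrib]

variable [DecidableEq q]

namespace Core

variable {α : Matrix p p Wien} {β : Matrix p q Wien} {γ : Matrix q p Wien}
    {δ : Matrix q q Wien} {X : Matrix p p Wien} {V : Matrix p q Wien} {Y : Matrix q p Wien}
    {U : Matrix q q Wien}

/-- `R₁₁` is the identity minus products with Hankel operators. -/
theorem R11_eq (h : Core α β γ δ X V Y U) {F : Matrix p ι Wien} (hF : GE 0 F) :
    opP α β (X * F) (Y * F) = F - (PG 0 (α * (X * F - PG 0 (X * F))) -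
      PG 0 (β * (Y * F - PG 1 (Y * F)))) := by
  have h1 : opP α β (X * F) (Y * F) = F - (α * (X * F - PG 0 (X * F)) -
      β * (Y * F - PG 1 (Y * F))) := by
    have : α * (X * F) - β * (Y * F) = F := by
      rw [← Matrix.mul_assoc, ← Matrix.mul_assoc, ← Matrix.sub_mul, h.f1, Matrix.one_mul]
    nth_rw 3 [← this]
    simp only [opP, Matrix.mul_sub]
    abel
  rw [← PG_of_GE (h.GE_opP (X * F) (Y * F)), h1, PG_sub, PG_of_GE hF, PG_sub]

/-- By the Fredholm alternative, `R₁₁` is surjective as soon as it is injective. -/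
theorem surj_of_inj (h : Core α β γ δ X V Y U)
    (inj : ∀ F : Matrix p Unit Wien, GE 0 F → opP α β (X * F) (Y * F) = 0 → F = 0)
    {ι : Type} (G : Matrix p ι Wien) (hG : GE 0 G) :
    ∃ F : Matrix p ι Wien, GE 0 F ∧ opP α β (X * F) (Y * F) = G := by
  have hK : IsCompactOperator (HM 0 α X - HM 1 β Y) := (compact_HM 0 α X).sub (compact_HM 1 β Y)
  have hKa : ∀ F : Matrix p Unit Wien, Matrix.of (fun i (_ : Unit) =>
      (HM 0 α X - HM 1 β Y) (fun a => F a ()) i) =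
      PG 0 (α * (X * PG 0 F - PG 0 (X * PG 0 F))) - PG 0 (β * (Y * PG 0 F - PG 1 (Y * PG 0 F))) := by
    intro F
    ext1 i u
    simp [HM_apply]
  have hGK : ∀ F : Matrix p Unit Wien, GE 0 (Matrix.of (fun i (_ : Unit) =>
      (HM 0 α X - HM 1 β Y) (fun a => F a ()) i)) := fun F => by
    rw [hKa]; exact (GE_PG _ _).sub (GE_PG _ _)
  have key : ∀ F : Matrix p Unit Wien, GE 0 F → opP α β (X * F) (Y * F) =
      F - Matrix.of (fun i (_ : Unit) => (HM 0 α X - HM 1 β Y) (fun a => F a ()) i) := fun F hF => by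
    rw [hKa, PG_of_GE hF, h.R11_eq hF]
  have hsurj : ∀ G : Matrix p Unit Wien, GE 0 G →
      ∃ F : Matrix p Unit Wien, GE 0 F ∧ opP α β (X * F) (Y * F) = G := by
    intro G hG
    rcases hK.hasEigenvalue_or_mem_resolventSet (μ := (1 : ℂ)) one_ne_zero with hE | hR
    · obtain ⟨f, hf⟩ := hE.exists_hasEigenvector
      exfalso
      apply hf.2
      have hf1 : (HM 0 α X - HM 1 β Y) f = f := by simpa using hf.apply_eq_smul
      have hfF : Matrix.of (fun i (_ : Unit) => (HM 0 α X - HM 1 β Y) f i) =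
          Matrix.of (fun i (_ : Unit) => f i) := by rw [hf1]
      have hF : GE 0 (Matrix.of (fun i (_ : Unit) => f i)) := by
        rw [← hfF]; exact hGK (Matrix.of (fun i (_ : Unit) => f i))
      have := inj _ hF (by
        rw [key _ hF, sub_eq_zero]
        exact hfF.symm)
      funext i
      exact congrFun (congrFun this i) ()
    · rw [spectrum.mem_resolventSet_iff] at hR
      obtain ⟨S, hS⟩ := hR.exists_right_inv
      have hg := DFunLike.congr_fun hS (fun i => G i ())
      set f := S fun i => G i () with hfdef
      have hf1 : f - (HM 0 α X - HM 1 β Y) f = fun i => G i () := by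
        simpa using hg
      have e : Matrix.of (fun i (_ : Unit) => f i) -
          Matrix.of (fun i (_ : Unit) => (HM 0 α X - HM 1 β Y) f i) = G := by
        ext1 i u
        exact congrFun hf1 i
      have hF : GE 0 (Matrix.of (fun i (_ : Unit) => f i)) := by
        rw [sub_eq_iff_eq_add.1 e]
        exact hG.add (hGK (Matrix.of (fun i (_ : Unit) => f i)))
      exact ⟨_, hF, by rw [key _ hF]; exact e⟩
  choose F hF hFG using fun j : ι => hsurj (G.submatrix id fun _ => j) fun a b l hl => hG a j l hl
  refine ⟨Matrix.of fun i j => F j i (), fun i j l hl => hF j i () l hl, ?_⟩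
  ext1 i j
  exact congrFun (congrFun (hFG j) i) ()

end Core
end Wien

/-! ### The inverse problem for matrices over the Wiener algebra -/

namespace Wien

section
variable {m n o : Type}

theorem LE_neg_one_of {F : Matrix m n Wien} (h : LE 0 F) (h0 : c0 F = 0) : LE (-1) F :=
  fun i j l hl => by
    rcases (show l = 0 ∨ l > 0 by omega) with rfl | hl
    · exact congrFun (congrFun h0 i) j
    · exact h i j l hl

theorem GE_one_of {F : Matrix m n Wien} (h : GE 0 F) (h0 : c0 F = 0) : GE 1 F :=
  fun i j l hl => by
    rcases (show l = 0 ∨ l < 0 by omega) with rfl | hl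
    · exact congrFun (congrFun h0 i) j
    · exact h i j l hl

theorem eq_Cn_of {F : Matrix m n Wien} (h : LE 0 F) (h' : GE 0 F) : F = Cn (c0 F) :=
  sub_eq_zero.1 (eq_zero_of_GE_LE (k := 1)
    (GE_one_of (h'.sub (GE_Cn _)) (by rw [c0_sub, c0_Cn, sub_self]))
    (h.sub (LE_Cn _)) (by norm_num))

theorem c0_Cn_mul [Fintype n] (c : Matrix m n ℂ) (F : Matrix n o Wien) :
    c0 (Cn c * F) = c * c0 F := by
  ext i j
  exact cf_Cn_mul c F i j 0

theorem c0_one [DecidableEq m] : c0 (1 : Matrix m m Wien) = 1 := by rw [← Cn_one, c0_Cn]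

end

variable {p q ι : Type} [Fintype p] [Fintype q]

/-- Condition (D1) for matrices over the Wiener algebra. -/
def D1 {p q : Type} [Fintype p] [Fintype q] (α : Matrix p p Wien) (β : Matrix p q Wien)
    (γ : Matrix q p Wien) (δ : Matrix q q Wien) : Prop :=
  αᴴ * α - γᴴ * γ = Cn (c0 α) ∧ δᴴ * δ - βᴴ * β = Cn (c0 δ) ∧ αᴴ * β = γᴴ * δ

/-- The four inclusions of the inverse problem for matrices over the Wiener algebra. -/
def Sol {p q : Type} [Fintype p] [Fintype q] [DecidableEq p] [DecidableEq q]
    (α : Matrix p p Wien) (β : Matrix p q Wien)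
    (γ : Matrix q p Wien) (δ : Matrix q q Wien) (g : Matrix p q Wien) : Prop :=
  LE (-1) (α + g * γ - 1) ∧ GE 1 (gᴴ * α + γ) ∧ LE (-1) (g * δ + β) ∧ GE 1 (δ + gᴴ * β - 1)

/-- The operator `R₁₁`, applied to all columns of `F`. -/
def T11 {p q ι : Type} [Fintype p] [Fintype q] [DecidableEq p] [DecidableEq q]
    (α : Matrix p p Wien) (β : Matrix p q Wien) (a : Matrix p p ℂ)
    (d : Matrix q q ℂ) (F : Matrix p ι Wien) : Matrix p ι Wien :=
  opP α β (Cn a⁻¹ * αᴴ * F) (Cn d⁻¹ * βᴴ * F)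

/-- The operator `R₂₂`, applied to all columns of `F`. -/
def T22 {p q ι : Type} [Fintype p] [Fintype q] [DecidableEq p] [DecidableEq q]
    (γ : Matrix q p Wien) (δ : Matrix q q Wien) (a : Matrix p p ℂ)
    (d : Matrix q q ℂ) (F : Matrix q ι Wien) : Matrix q ι Wien :=
  opM γ δ (Cn a⁻¹ * γᴴ * F) (Cn d⁻¹ * δᴴ * F)

variable [DecidableEq p] [DecidableEq q]

section
variable {α : Matrix p p Wien} {β : Matrix p q Wien} {γ : Matrix q p Wien}
    {δ : Matrix q q Wien} {g : Matrix p q Wien}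

theorem D1.herm_a (h : D1 α β γ δ) : (c0 α)ᴴ = c0 α := by
  have := congrArg conjTranspose h.1
  rw [conjTranspose_sub, conjTranspose_mul, conjTranspose_mul, conjTranspose_conjTranspose,
    conjTranspose_conjTranspose, h.1, Cn_ct] at this
  rw [← c0_Cn (c0 _)ᴴ, ← this, c0_Cn]

theorem D1.herm_d (h : D1 α β γ δ) : (c0 δ)ᴴ = c0 δ := by
  have := congrArg conjTranspose h.2.1
  rw [conjTranspose_sub, conjTranspose_mul, conjTranspose_mul, conjTranspose_conjTranspose,
    conjTranspose_conjTranspose, h.2.1, Cn_ct] at this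
  rw [← c0_Cn (c0 _)ᴴ, ← this, c0_Cn]

/-- (D1) says that an explicit block matrix is a left inverse; over a commutative ring it is then
also a right inverse. -/
theorem core_of_D1 (hα : GE 0 α) (hβ : GE 0 β) (hγ : LE 0 γ) (hδ : LE 0 δ)
    (ha : IsUnit (c0 α)) (hd : IsUnit (c0 δ)) (h : D1 α β γ δ) :
    Core α β γ δ (Cn (c0 α)⁻¹ * αᴴ) (Cn (c0 α)⁻¹ * γᴴ) (Cn (c0 δ)⁻¹ * βᴴ) (Cn (c0 δ)⁻¹ * δᴴ) := by
  have ha' : (c0 α)⁻¹ * c0 α = 1 := Matrix.nonsing_inv_mul _ ((Matrix.isUnit_iff_isUnit_det _).1 ha)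
  have hd' : (c0 δ)⁻¹ * c0 δ = 1 := Matrix.nonsing_inv_mul _ ((Matrix.isUnit_iff_isUnit_det _).1 hd)
  have e1 : Cn (c0 α)⁻¹ * αᴴ * α - Cn (c0 α)⁻¹ * γᴴ * γ = 1 := by
    rw [Matrix.mul_assoc, Matrix.mul_assoc, ← Matrix.mul_sub, h.1, Cn_mul, ha', Cn_one]
  have e2 : Cn (c0 δ)⁻¹ * δᴴ * δ - Cn (c0 δ)⁻¹ * βᴴ * β = 1 := by
    rw [Matrix.mul_assoc, Matrix.mul_assoc, ← Matrix.mul_sub, h.2.1, Cn_mul, hd', Cn_one]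
  have e3 : Cn (c0 α)⁻¹ * αᴴ * β = Cn (c0 α)⁻¹ * γᴴ * δ := by
    rw [Matrix.mul_assoc, Matrix.mul_assoc, h.2.2]
  have e4 : Cn (c0 δ)⁻¹ * βᴴ * α = Cn (c0 δ)⁻¹ * δᴴ * γ := by
    have := congrArg conjTranspose h.2.2
    simp only [conjTranspose_mul, conjTranspose_conjTranspose] at this
    rw [Matrix.mul_assoc, Matrix.mul_assoc, this]
  have hb : fromBlocks (Cn (c0 α)⁻¹ * αᴴ) (-(Cn (c0 α)⁻¹ * γᴴ)) (-(Cn (c0 δ)⁻¹ * βᴴ))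
      (Cn (c0 δ)⁻¹ * δᴴ) * fromBlocks α β γ δ = 1 := by
    rw [fromBlocks_multiply, ← fromBlocks_one]
    simp only [Matrix.neg_mul, ← sub_eq_add_neg, e1, e3, e4, sub_self, neg_add_eq_sub, e2]
  rw [mul_eq_one_comm, fromBlocks_multiply, ← fromBlocks_one, fromBlocks_inj] at hb
  simp only [Matrix.mul_neg, ← sub_eq_add_neg, neg_add_eq_sub] at hb
  obtain ⟨f1, f2, f3, f4⟩ := hb
  refine ⟨hα, hβ, hγ, hδ, ?_, ?_, ?_, ?_, e1, e2, e3, e4, f1, (sub_eq_zero.1 f2).symm,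
    sub_eq_zero.1 f3, f4⟩
  · refine LE_neg_one_of (((LE_Cn _).mul (hα.ct rfl) (by norm_num)).sub LE_one) ?_
    rw [c0_sub, c0_Cn_mul, c0_ct, h.herm_a, ha', c0_one, sub_self]
  · exact (LE_Cn _).mul (hβ.ct rfl) (by norm_num)
  · exact (GE_Cn _).mul (hγ.ct rfl) (by norm_num)
  · refine GE_one_of (((GE_Cn _).mul (hδ.ct rfl) (by norm_num)).sub GE_one) ?_
    rw [c0_sub, c0_Cn_mul, c0_ct, h.herm_d, hd', c0_one, sub_self]

theorem Sol.mirror (h : Sol α β γ δ g) : Sol (Rf δ) (Rf γ) (Rf β) (Rf α) (Rf gᴴ) := by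
  obtain ⟨s1, s2, s3, s4⟩ := h
  have e := Rf_ct gᴴ
  rw [conjTranspose_conjTranspose] at e
  rw [Sol, e, ← Rf_mul, ← Rf_mul, ← Rf_mul, ← Rf_mul, ← Rf_add, ← Rf_add, ← Rf_add, ← Rf_add]
  have e1 : Rf (α + g * γ) - 1 = Rf (α + g * γ - 1) := by rw [Rf_sub, Rf_one]
  have e2 : Rf (δ + gᴴ * β) - 1 = Rf (δ + gᴴ * β - 1) := by rw [Rf_sub, Rf_one]
  rw [e1, e2]
  exact ⟨s4.rf (by norm_num), s3.rf (by norm_num), s2.rf (by norm_num), s1.rf (by norm_num)⟩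

/-- `α*α - γ*γ` is self-adjoint with coefficients of index `≤ 0` only, hence constant. -/
theorem Sol.D1_1 (h : Sol α β γ δ g) (hα : GE 0 α) (hγ : LE 0 γ) :
    αᴴ * α - γᴴ * γ = Cn (c0 α) := by
  obtain ⟨s1, s2, -, -⟩ := h
  obtain ⟨u, hu⟩ : ∃ u, u = α + g * γ - 1 := ⟨_, rfl⟩
  obtain ⟨v, hv⟩ : ∃ v, v = gᴴ * α + γ := ⟨_, rfl⟩
  rw [← hu] at s1
  rw [← hv] at s2
  have e : αᴴ * α - γᴴ * γ = αᴴ * u + αᴴ - vᴴ * γ := by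
    rw [hu, hv]
    simp only [Matrix.mul_sub, Matrix.mul_add, conjTranspose_add, conjTranspose_mul,
      conjTranspose_conjTranspose, Matrix.add_mul, Matrix.mul_one, Matrix.mul_assoc]
    abel
  have l1 : LE (-1) (αᴴ * u) := (hα.ct rfl).mul s1 (by norm_num)
  have l2 : LE (-1) (vᴴ * γ) := (s2.ct rfl).mul hγ (by norm_num)
  have hL : LE 0 (αᴴ * α - γᴴ * γ) := by
    rw [e]
    exact ((l1.mono (by norm_num)).add (hα.ct (by norm_num))).sub (l2.mono (by norm_num))
  have hh : (αᴴ * α - γᴴ * γ)ᴴ = αᴴ * α - γᴴ * γ := by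
    simp only [conjTranspose_sub, conjTranspose_mul, conjTranspose_conjTranspose]
  have hG : GE 0 (αᴴ * α - γᴴ * γ) := by
    rw [← hh]; exact hL.ct (by norm_num)
  have hc : c0 (αᴴ * α - γᴴ * γ) = (c0 α)ᴴ := by
    rw [e, c0_sub, c0_add, c0_of_LE l1 (by norm_num), c0_of_LE l2 (by norm_num), c0_ct]
    simp
  rw [eq_Cn_of hL hG, ← hh, c0_ct, hc, conjTranspose_conjTranspose]

theorem Sol.D1 (h : Sol α β γ δ g) (hα : GE 0 α) (hβ : GE 0 β) (hγ : LE 0 γ) (hδ : LE 0 δ) :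
    D1 α β γ δ := by
  refine ⟨h.D1_1 hα hγ, ?_, ?_⟩
  · have := h.mirror.D1_1 (hδ.rf (by norm_num)) (hβ.rf (by norm_num))
    have e : c0 (Rf δ) = c0 δ := by ext i j; simp [c0, Rf, cf_refl]
    rw [Rf_ct, Rf_ct, ← Rf_mul, ← Rf_mul, ← Rf_sub, e, ← Rf_Cn] at this
    exact Rf_inj this
  · obtain ⟨s1, s2, s3, s4⟩ := h
    have e1 : αᴴ * β - γᴴ * δ = αᴴ * (g * δ + β) - (gᴴ * α + γ)ᴴ * δ := by
      simp only [Matrix.mul_add, conjTranspose_add, conjTranspose_mul,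
        conjTranspose_conjTranspose, Matrix.add_mul, Matrix.mul_assoc]
      abel
    have e2 : αᴴ * β - γᴴ * δ = (α + g * γ - 1)ᴴ * β + β - γᴴ * (δ + gᴴ * β - 1) - γᴴ := by
      simp only [Matrix.mul_sub, Matrix.mul_add, conjTranspose_add, conjTranspose_mul,
        conjTranspose_sub, conjTranspose_one, Matrix.add_mul, Matrix.sub_mul, Matrix.mul_one,
        Matrix.one_mul, Matrix.mul_assoc]
      abel
    refine sub_eq_zero.1 (eq_zero_of_GE_LE (k := 0) (l := -1) ?_ ?_ (by norm_num))
    · rw [e2]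
      refine GE.sub (GE.sub (GE.add ?_ hβ) ?_) (hγ.ct (by norm_num))
      · exact ((s1.ct rfl).mul hβ rfl).mono (by norm_num)
      · exact ((hγ.ct rfl).mul s4 rfl).mono (by norm_num)
    · rw [e1]
      exact ((hα.ct rfl).mul s3 (by norm_num)).sub ((s2.ct rfl).mul hδ (by norm_num))

end

namespace Core

variable {α : Matrix p p Wien} {β : Matrix p q Wien} {γ : Matrix q p Wien}
    {δ : Matrix q q Wien} {X : Matrix p p Wien} {V : Matrix p q Wien} {Y : Matrix q p Wien}
    {U : Matrix q q Wien} {g : Matrix p q Wien}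

/-- For a solution `g`, `R₂₁ = -P_{≤0} g* R₁₁`. -/
theorem sol_R21 (h : Core α β γ δ X V Y U) (s : Sol α β γ δ g) (F : Matrix p ι Wien) :
    opM γ δ (X * F) (Y * F) = -(gᴴ * opP α β (X * F) (Y * F) -
      PG 1 (gᴴ * opP α β (X * F) (Y * F))) := by
  obtain ⟨s1, s2, s3, s4⟩ := s
  have e : gᴴ * opP α β (X * F) (Y * F) = -opM γ δ (X * F) (Y * F) +
      ((gᴴ * α + γ) * PG 0 (X * F) - (δ + gᴴ * β - 1) * PG 1 (Y * F) - PG 1 (Y * F)) := by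
    have : opM γ δ (X * F) (Y * F) = γ * PG 0 (X * F) - δ * PG 1 (Y * F) := by
      rw [opM_eq, ← Matrix.mul_assoc, ← Matrix.mul_assoc, h.f3, sub_self, zero_add]
    rw [this, opP]
    simp only [Matrix.mul_sub, Matrix.add_mul, Matrix.sub_mul, Matrix.one_mul, Matrix.mul_assoc]
    abel
  have hG : GE 1 ((gᴴ * α + γ) * PG 0 (X * F) - (δ + gᴴ * β - 1) * PG 1 (Y * F) -
      PG 1 (Y * F)) :=
    ((s2.mul (GE_PG _ _) (by norm_num)).sub
      ((s4.mul (GE_PG 1 _) rfl).mono (by norm_num))).sub (GE_PG _ _)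
  rw [e, PG_add, PG_of_GE hG, PG_of_LE (h.LE_opM _ _).neg (by norm_num), zero_add,
    add_sub_cancel_right, neg_neg]

/-- For a solution `g`, `R₁₁ + P_{≥0} g R₂₁` is the identity. -/
theorem sol_R11 (h : Core α β γ δ X V Y U) (s : Sol α β γ δ g) {F : Matrix p ι Wien}
    (hF : GE 0 F) :
    PG 0 (g * opM γ δ (X * F) (Y * F)) = F - opP α β (X * F) (Y * F) := by
  obtain ⟨s1, s2, s3, s4⟩ := s
  have e : g * opM γ δ (X * F) (Y * F) = (F - opP α β (X * F) (Y * F)) +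
      ((g * δ + β) * (Y * F - PG 1 (Y * F)) - (α + g * γ - 1) * (X * F - PG 0 (X * F)) -
        (X * F - PG 0 (X * F))) := by
    have : F = α * (X * F) - β * (Y * F) := by
      rw [← Matrix.mul_assoc, ← Matrix.mul_assoc, ← Matrix.sub_mul, h.f1, Matrix.one_mul]
    nth_rw 3 [this]
    simp only [opM, opP, Matrix.mul_sub, Matrix.add_mul, Matrix.sub_mul, Matrix.one_mul,
      Matrix.mul_assoc]
    abel
  rw [e, PG_add, PG_of_GE (hF.sub (h.GE_opP _ _)), PG_of_LE (l := -1) ?_ (by norm_num), add_zero]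
  exact ((s3.mul (LE_PG _ _ rfl) (by norm_num)).sub
    ((s1.mul (LE_PG _ _ rfl) rfl).mono (by norm_num))).sub (LE_PG _ _ (by norm_num))

/-- `R₁₁` has the left inverse suggested by `sol_R21` and `sol_R11`, so it is injective. -/
theorem sol_inj (h : Core α β γ δ X V Y U) (s : Sol α β γ δ g) (F : Matrix p ι Wien)
    (hF : GE 0 F) (h0 : opP α β (X * F) (Y * F) = 0) : F = 0 := by
  have h1 := h.sol_R21 s F
  have h2 := h.sol_R11 s hF
  have z : PG 1 (0 : Matrix q ι Wien) = 0 := PG_of_LE (l := 0) (fun _ _ _ _ => rfl) (by norm_num)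
  have z' : PG 0 (0 : Matrix p ι Wien) = 0 :=
    PG_of_LE (l := -1) (fun _ _ _ _ => rfl) (by norm_num)
  rw [h0, Matrix.mul_zero, z, sub_zero, neg_zero] at h1
  rw [h1, h0, Matrix.mul_zero, z', sub_zero] at h2
  exact h2.symm

/-- For a solution `g`, `R₁₁ g = -β`: with `F = R₁₁⁻¹ β` one has `R₂₁ F = δ - 1`, and then
`R₁₁ F + P_{≥0} g R₂₁ F = F` becomes `F = -g`. -/
theorem sol_eq (h : Core α β γ δ X V Y U) (s : Sol α β γ δ g) (hg : GE 0 g) :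
    opP α β (X * g) (Y * g) = -β := by
  obtain ⟨F, hF, hFβ⟩ := h.surj_of_inj (h.sol_inj s) β h.hβ
  have h1 := h.sol_R21 s F
  have h2 := h.sol_R11 s hF
  obtain ⟨s1, s2, s3, s4⟩ := s
  have e1 : opM γ δ (X * F) (Y * F) = δ - 1 := by
    have : gᴴ * β = (δ + gᴴ * β - 1) - (δ - 1) := by abel
    rw [h1, hFβ, this, PG_sub, PG_of_GE s4, PG_of_LE (h.hδ.sub LE_one) (by norm_num)]
    abel
  have e2 : g * (δ - 1) = (g * δ + β) - (β + g) := by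
    rw [Matrix.mul_sub, Matrix.mul_one]; abel
  rw [e1, hFβ, e2, PG_sub, PG_of_LE s3 (by norm_num), PG_of_GE (h.hβ.add hg), zero_sub,
    neg_add', sub_eq_sub_iff_add_eq_add] at h2
  have hFg : g = -F := by
    rw [neg_add_cancel] at h2
    rw [eq_neg_iff_add_eq_zero, add_comm, ← h2]
  rw [hFg, Matrix.mul_neg, Matrix.mul_neg, opP_neg, hFβ]

/-- The reflection of `R₂₂` is the operator `R₁₁` of the reflected data. -/
theorem R22_Rf (F : Matrix q ι Wien) :
    opP (Rf δ) (Rf γ) (Rf U * F) (Rf V * F) = Rf (opM γ δ (V * Rf F) (U * Rf F)) := by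
  conv_lhs => rw [← Rf_Rf F]
  rw [← Rf_mul, ← Rf_mul, opP_Rf]

theorem Rf_zero : Rf (0 : Matrix q ι Wien) = 0 := by ext1; simp [Rf]

/-- Injectivity of `R₂₂` is injectivity of the reflected `R₁₁`. -/
theorem inj_mirror
    (inj : ∀ F : Matrix q ι Wien, LE 0 F → opM γ δ (V * F) (U * F) = 0 → F = 0)
    (F : Matrix q ι Wien) (hF : GE 0 F)
    (h0 : opP (Rf δ) (Rf γ) (Rf U * F) (Rf V * F) = 0) : F = 0 := by
  rw [R22_Rf, ← Rf_zero] at h0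
  have := inj (Rf F) (hF.rf (by norm_num)) (Rf_inj h0)
  rw [← Rf_zero] at this
  exact Rf_inj this

theorem surj_of_inj' (h : Core α β γ δ X V Y U)
    (inj : ∀ F : Matrix q Unit Wien, LE 0 F → opM γ δ (V * F) (U * F) = 0 → F = 0)
    {ι : Type} (G : Matrix q ι Wien) (hG : LE 0 G) :
    ∃ F : Matrix q ι Wien, LE 0 F ∧ opM γ δ (V * F) (U * F) = G := by
  obtain ⟨F, hF, hFG⟩ := h.mirror.surj_of_inj (inj_mirror inj) (Rf G) (hG.rf (by norm_num))
  rw [R22_Rf] at hFG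
  exact ⟨Rf F, hF.rf (by norm_num), Rf_inj hFG⟩

theorem inj_cols' (inj : ∀ F : Matrix q Unit Wien, LE 0 F → opM γ δ (V * F) (U * F) = 0 → F = 0)
    {ι : Type} (F : Matrix q ι Wien) (hF : LE 0 F) (h0 : opM γ δ (V * F) (U * F) = 0) : F = 0 := by
  ext1 i j
  have := inj (F.submatrix id fun _ => j) (fun a b l hl => hF a j l hl) (by
    ext1 a b; exact congrFun (congrFun h0 a) j)
  exact congrFun (congrFun this i) ()

theorem sol_inj' (h : Core α β γ δ X V Y U) (s : Sol α β γ δ g) (F : Matrix q ι Wien)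
    (hF : LE 0 F) (h0 : opM γ δ (V * F) (U * F) = 0) : F = 0 := by
  have := h.mirror.sol_inj s.mirror (Rf F) (hF.rf (by norm_num)) (by
    rw [R22_Rf, Rf_Rf, h0, Rf_zero])
  rw [← Rf_zero] at this
  exact Rf_inj this

theorem sol_eq' (h : Core α β γ δ X V Y U) (s : Sol α β γ δ g) (hg : GE 0 g) :
    opM γ δ (V * gᴴ) (U * gᴴ) = -γ := by
  have := h.mirror.sol_eq s.mirror ((hg.ct rfl).rf (by norm_num))
  rw [R22_Rf, Rf_Rf, ← Rf_neg] at this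
  exact Rf_inj this

end Core

section
variable {α : Matrix p p Wien} {β : Matrix p q Wien} {γ : Matrix q p Wien}
    {δ : Matrix q q Wien}

/-- Sufficiency of (D1) and (D2). -/
theorem exists_sol (hα : GE 0 α) (hβ : GE 0 β) (hγ : LE 0 γ) (hδ : LE 0 δ)
    (ha : IsUnit (c0 α)) (hd : IsUnit (c0 δ)) (h : D1 α β γ δ)
    (inj : ∀ F : Matrix p Unit Wien, GE 0 F → T11 α β (c0 α) (c0 δ) F = 0 → F = 0)
    (inj' : ∀ F : Matrix q Unit Wien, LE 0 F → T22 γ δ (c0 α) (c0 δ) F = 0 → F = 0) :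
    ∃ g : Matrix p q Wien, GE 0 g ∧ Sol α β γ δ g := by
  have c := core_of_D1 hα hβ hγ hδ ha hd h
  have surj := @Core.surj_of_inj _ _ _ _ _ _ _ _ _ _ _ _ _ _ c inj
  have surj' := @Core.surj_of_inj' _ _ _ _ _ _ _ _ _ _ _ _ _ _ c inj'
  obtain ⟨g, hg, hgβ⟩ := surj _ hβ.neg
  obtain ⟨k, hk, hkγ⟩ := surj' _ hγ.neg
  have ha' : ((c0 α)⁻¹)ᴴ = (c0 α)⁻¹ := by rw [conjTranspose_nonsing_inv, h.herm_a]
  have hd' : ((c0 δ)⁻¹)ᴴ = (c0 δ)⁻¹ := by rw [conjTranspose_nonsing_inv, h.herm_d]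
  have hkg : k = gᴴ := c.adjoint_eq ha' hd' rfl rfl rfl rfl (inj_cols inj)
    (Core.inj_cols' inj') surj surj' hg hgβ hk hkγ
  obtain ⟨s1, s3⟩ := c.half_sol (inj_cols inj) surj' hg hgβ
  have hi := Core.inj_mirror inj'
  obtain ⟨s4, s2⟩ := c.mirror.half_sol (g := Rf k) (inj_cols hi)
    (fun H hH => by
      obtain ⟨K, hK, hKH⟩ := surj (Rf H) (hH.rf (by norm_num))
      refine ⟨Rf K, hK.rf (by norm_num), ?_⟩
      rw [← Rf_mul, ← Rf_mul, opM_Rf, hKH, Rf_Rf])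
    (hk.rf (by norm_num)) (by rw [Core.R22_Rf, Rf_Rf, hkγ, Rf_neg])
  rw [← Rf_mul, ← Rf_add, ← Rf_one, ← Rf_sub] at s4
  rw [← Rf_mul, ← Rf_add] at s2
  have s4' := s4.rf (l := 1) (by norm_num)
  have s2' := s2.rf (l := 1) (by norm_num)
  rw [Rf_Rf, hkg] at s4' s2'
  exact ⟨g, hg, s1, s2', s3, s4'⟩

/-- Necessity of (D1) and (D2), together with invertibility of `R₁₁` and `R₂₂` and the formulas for a
solution. -/
theorem of_sol (hα : GE 0 α) (hβ : GE 0 β) (hγ : LE 0 γ) (hδ : LE 0 δ)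
    (ha : IsUnit (c0 α)) (hd : IsUnit (c0 δ)) {g : Matrix p q Wien} (hg : GE 0 g)
    (s : Sol α β γ δ g) :
    D1 α β γ δ ∧
    (∀ {ι : Type} (F : Matrix p ι Wien), GE 0 F → T11 α β (c0 α) (c0 δ) F = 0 → F = 0) ∧
    (∀ {ι : Type} (F : Matrix q ι Wien), LE 0 F → T22 γ δ (c0 α) (c0 δ) F = 0 → F = 0) ∧
    (∀ G : Matrix p Unit Wien, GE 0 G → ∃ F, GE 0 F ∧ T11 α β (c0 α) (c0 δ) F = G) ∧
    (∀ G : Matrix q Unit Wien, LE 0 G → ∃ F, LE 0 F ∧ T22 γ δ (c0 α) (c0 δ) F = G) ∧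
    T11 α β (c0 α) (c0 δ) g = -β ∧ T22 γ δ (c0 α) (c0 δ) gᴴ = -γ := by
  have h := s.D1 hα hβ hγ hδ
  have c := core_of_D1 hα hβ hγ hδ ha hd h
  exact ⟨h, c.sol_inj s, c.sol_inj' s, c.surj_of_inj (c.sol_inj s), c.surj_of_inj' (c.sol_inj' s),
    c.sol_eq s hg, c.sol_eq' s hg⟩

theorem T11_sub {ι : Type} (a : Matrix p p ℂ) (d : Matrix q q ℂ) (F G : Matrix p ι Wien) :
    T11 α β a d (F - G) = T11 α β a d F - T11 α β a d G := by
  rw [T11, Matrix.mul_sub, Matrix.mul_sub, opP_sub]; rfl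

theorem T22_sub {ι : Type} (a : Matrix p p ℂ) (d : Matrix q q ℂ) (F G : Matrix q ι Wien) :
    T22 γ δ a d (F - G) = T22 γ δ a d F - T22 γ δ a d G := by
  simp only [T22, opM, Matrix.mul_sub, PG_sub]; abel

theorem T11_zero {ι : Type} (a : Matrix p p ℂ) (d : Matrix q q ℂ) :
    T11 α β a d (0 : Matrix p ι Wien) = 0 := by
  simpa using T11_sub (α := α) (β := β) a d (0 : Matrix p ι Wien) 0

theorem T22_zero {ι : Type} (a : Matrix p p ℂ) (d : Matrix q q ℂ) :
    T22 γ δ a d (0 : Matrix q ι Wien) = 0 := by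
  simpa using T22_sub (γ := γ) (δ := δ) a d (0 : Matrix q ι Wien) 0

end
end Wien

/-! ### Coefficient sequences as matrices over the Wiener algebra -/

namespace Wien

/-- The sequence of Fourier coefficients of a matrix over the Wiener algebra. -/
def coM {r s : ℕ} (F : Matrix (Fin r) (Fin s) Wien) : ZM r s :=
  fun l => Matrix.of fun i j => cf (F i j) l

/-- The sequence of Fourier coefficients of the column `c` of a matrix over the Wiener algebra. -/
def coV {n : ℕ} {ι : Type} (F : Matrix (Fin n) ι Wien) (c : ι) : ZV n :=
  fun l i => cf (F i c) l

theorem exists_coM {r s : ℕ} {φ : ZM r s} (h : zl1M φ) : ∃ F, φ = coM F :=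
  ⟨fun i j => ofS (fun l => φ l i j) (h i j), rfl⟩

theorem exists_coV {n : ℕ} {f : ZV n} (h : zl1V f) :
    ∃ F : Matrix (Fin n) Unit Wien, f = coV F () :=
  ⟨fun i _ => ofS (fun l => f l i) (h i), rfl⟩

theorem zl1M_coM {r s : ℕ} (F : Matrix (Fin r) (Fin s) Wien) : zl1M (coM F) :=
  fun i j => (F i j).summ

theorem zl1V_coV {n : ℕ} {ι : Type} (F : Matrix (Fin n) ι Wien) (c : ι) : zl1V (coV F c) :=
  fun i => (F i c).summ

theorem coM_apply {r s : ℕ} (F : Matrix (Fin r) (Fin s) Wien) (l : ℤ) (i j) :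
    coM F l i j = cf (F i j) l := rfl

theorem coM_inj {r s : ℕ} {F G : Matrix (Fin r) (Fin s) Wien} : coM F = coM G ↔ F = G :=
  ⟨fun h => mext fun i j l => congrFun (congrFun (congrFun h l) i) j, fun h => h ▸ rfl⟩

theorem coV_inj {n : ℕ} {F G : Matrix (Fin n) Unit Wien} (h : coV F () = coV G ()) : F = G :=
  mext fun i _ l => congrFun (congrFun h l) i

theorem coM_eq_zero_iff {r s : ℕ} (F : Matrix (Fin r) (Fin s) Wien) (l : ℤ) :
    coM F l = 0 ↔ ∀ i j, cf (F i j) l = 0 :=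
  ⟨fun h i j => congrFun (congrFun h i) j, fun h => Matrix.ext h⟩

theorem GE_iff {r s : ℕ} {F : Matrix (Fin r) (Fin s) Wien} {k : ℤ} :
    GE k F ↔ ∀ l < k, coM F l = 0 :=
  ⟨fun h l hl => Matrix.ext fun i j => h i j l hl,
    fun h i j l hl => (coM_eq_zero_iff F l).1 (h l hl) i j⟩

theorem LE_iff {r s : ℕ} {F : Matrix (Fin r) (Fin s) Wien} {k : ℤ} :
    LE k F ↔ ∀ l > k, coM F l = 0 :=
  ⟨fun h l hl => Matrix.ext fun i j => h i j l hl,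
    fun h i j l hl => (coM_eq_zero_iff F l).1 (h l hl) i j⟩

theorem coV_mem_WPlus {n : ℕ} {F : Matrix (Fin n) Unit Wien} : coV F () ∈ WPlus n ↔ GE 0 F :=
  ⟨fun h i _ l hl => congrFun (h.2 l hl) i, fun h => ⟨zl1V_coV F (), fun l hl =>
    funext fun i => h i () l hl⟩⟩

theorem coV_mem_WMinus {n : ℕ} {F : Matrix (Fin n) Unit Wien} : coV F () ∈ WMinus n ↔ LE 0 F :=
  ⟨fun h i _ l hl => congrFun (h.2 l hl) i, fun h => ⟨zl1V_coV F (), fun l hl =>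
    funext fun i => h i () l hl⟩⟩

theorem coM_add {r s : ℕ} (F G : Matrix (Fin r) (Fin s) Wien) (l : ℤ) :
    coM (F + G) l = coM F l + coM G l := rfl

theorem coM_sub {r s : ℕ} (F G : Matrix (Fin r) (Fin s) Wien) (l : ℤ) :
    coM (F - G) l = coM F l - coM G l := rfl

theorem coM_Cn {r s : ℕ} (c : Matrix (Fin r) (Fin s) ℂ) (l : ℤ) :
    coM (Cn c) l = if l = 0 then c else 0 := by
  ext i j
  rw [coM_apply, Cn, Matrix.map_apply, cf_constHom]
  split_ifs <;> rfl

theorem coM_one {n : ℕ} : coM (1 : Matrix (Fin n) (Fin n) Wien) = eCoeff n := by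
  funext l
  rw [← Cn_one, coM_Cn, eCoeff]

theorem zadj_coM {r s : ℕ} (F : Matrix (Fin r) (Fin s) Wien) : zadj (coM F) = coM Fᴴ := rfl

theorem tsum_sum_mul {n : ℕ} (f g : Fin n → Wien) (j : ℤ) :
    ∑' l, ∑ x, cf (f x) l * cf (g x) (j - l) = ∑ x, ∑' l, cf (f x) l * cf (g x) (j - l) :=
  Summable.tsum_finsetSum fun x _ => (summ_conv (f x).summ (g x).summ j).of_norm

theorem zconvM_coM {r s u : ℕ} (F : Matrix (Fin r) (Fin s) Wien) (G : Matrix (Fin s) (Fin u) Wien) :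
    zconvM (coM F) (coM G) = coM (F * G) := by
  funext j
  ext i k
  rw [coM_apply, cf_mul_apply, ← tsum_sum_mul]
  rfl

theorem zconvV_coV {r s : ℕ} {ι : Type} (F : Matrix (Fin r) (Fin s) Wien)
    (G : Matrix (Fin s) ι Wien) (c : ι) : zconvV (coM F) (coV G c) = coV (F * G) c := by
  funext j i
  rw [coV, cf_mul_apply, ← tsum_sum_mul]
  rfl

theorem Pge_coV {n : ℕ} {ι : Type} (k : ℤ) (F : Matrix (Fin n) ι Wien) (c : ι) :
    Pge k (coV F c) = coV (PG k F) c := by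
  funext j i
  rw [Pge, coV, cf_PG]
  split_ifs <;> rfl

theorem Ple_coV {n : ℕ} {ι : Type} {k k' : ℤ} (hk : k' = k + 1) (F : Matrix (Fin n) ι Wien)
    (c : ι) : Ple k (coV F c) = coV (F - PG k' F) c := by
  funext j i
  rw [Ple, coV, Matrix.sub_apply, cf_sub, cf_PG]
  by_cases h : j ≤ k
  · rw [if_pos h, if_neg (by omega), sub_zero]; rfl
  · rw [if_neg h, if_pos (by omega), sub_self]; rfl

theorem cmul_coV {n m : ℕ} {ι : Type} (a : Matrix (Fin n) (Fin m) ℂ) (F : Matrix (Fin m) ι Wien)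
    (c : ι) : cmul a (coV F c) = coV (Cn a * F) c := by
  funext j i
  exact (cf_Cn_mul a F i c j).symm

variable {p q : ℕ} {α : Matrix (Fin p) (Fin p) Wien} {β : Matrix (Fin p) (Fin q) Wien}
  {γ : Matrix (Fin q) (Fin p) Wien} {δ : Matrix (Fin q) (Fin q) Wien}

/-- `R₁₁` acts on coefficient sequences as `T11`; the outer projections do nothing because `α` and
`β` have no coefficients of negative index. -/
theorem R11_coV (hα : GE 0 α) (hβ : GE 0 β) (a : Matrix (Fin p) (Fin p) ℂ)
    (d : Matrix (Fin q) (Fin q) ℂ) {ι : Type} (F : Matrix (Fin p) ι Wien) (c : ι) :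
    R11 (coM α) (coM β) a d (coV F c) = coV (T11 α β a d F) c := by
  rw [R11, zadj_coM, zadj_coM]
  simp only [zconvV_coV, Pge_coV, cmul_coV]
  rw [PG_of_GE (hα.mul ((GE_Cn _).mul (GE_PG 0 _) rfl) (by norm_num)),
    PG_of_GE (((hβ.mul ((GE_Cn _).mul (GE_PG 1 _) rfl) rfl)).mono (by norm_num)),
    T11, opP, Matrix.mul_assoc, Matrix.mul_assoc (Cn d⁻¹), PG_Cn_mul, PG_Cn_mul]
  rfl

/-- `R₂₂` acts on coefficient sequences as `T22`; the outer projections do nothing because `γ` and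
`δ` have no coefficients of positive index. -/
theorem R22_coV (hγ : LE 0 γ) (hδ : LE 0 δ) (a : Matrix (Fin p) (Fin p) ℂ)
    (d : Matrix (Fin q) (Fin q) ℂ) {ι : Type} (F : Matrix (Fin q) ι Wien) (c : ι) :
    R22 (coM γ) (coM δ) a d (coV F c) = coV (T22 γ δ a d F) c := by
  rw [R22, zadj_coM, zadj_coM]
  simp only [zconvV_coV, Ple_coV (k := 0) (k' := 1) (by norm_num),
    Ple_coV (k := -1) (k' := 0) (by norm_num), cmul_coV]
  rw [PG_of_LE (hδ.mul ((LE_Cn _).mul (LE_PG 1 _ rfl) rfl) rfl) (by norm_num),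
    PG_of_LE (hγ.mul ((LE_Cn _).mul (LE_PG 0 _ rfl) rfl) rfl) (by norm_num),
    T22, opM, Matrix.mul_assoc, Matrix.mul_assoc (Cn a⁻¹), PG_Cn_mul, PG_Cn_mul,
    ← Matrix.mul_sub, ← Matrix.mul_sub, sub_zero, sub_zero]
  rfl

theorem condD1_iff : CondD1 (coM α) (coM β) (coM γ) (coM δ) ↔ D1 α β γ δ := by
  have h0 : ∀ {n : ℕ} (F : Matrix (Fin n) (Fin n) Wien), coM F 0 = c0 F := fun _ => rfl
  simp only [CondD1, D1, zadj_coM, zconvM_coM, h0, ← coM_sub, ← coM_Cn, ← funext_iff, coM_inj]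

theorem degSol_iff {g : Matrix (Fin p) (Fin q) Wien} :
    DEGSol (coM α) (coM β) (coM γ) (coM δ) (coM g) ↔ Sol α β γ δ g := by
  simp only [DEGSol, Sol, zadj_coM, zconvM_coM, ← coM_one, ← coM_add, ← coM_sub, GE_iff, LE_iff]
  have e1 : ∀ j : ℤ, 0 ≤ j ↔ j > -1 := by omega
  have e2 : ∀ j : ℤ, j ≤ 0 ↔ j < 1 := by omega
  simp only [e1, e2]

end Wien

/-- Theorem 9.1: solution of the discrete twofold Ellis–Gohberg inverse
problem. -/
theorem stmt19 {p q : ℕ} (α : ZM p p) (β : ZM p q) (γ : ZM q p) (δ : ZM q q)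
    (hα1 : zl1M α) (hα2 : ∀ j < (0:ℤ), α j = 0)
    (hβ1 : zl1M β) (hβ2 : ∀ j < (0:ℤ), β j = 0)
    (hγ1 : zl1M γ) (hγ2 : ∀ j > (0:ℤ), γ j = 0)
    (hδ1 : zl1M δ) (hδ2 : ∀ j > (0:ℤ), δ j = 0)
    (ha₀ : IsUnit (α 0)) (hd₀ : IsUnit (δ 0)) :
    ((∃ g : ZM p q, zl1M g ∧ (∀ j < (0:ℤ), g j = 0) ∧ DEGSol α β γ δ g) ↔
      (CondD1 α β γ δ ∧
        (∀ f₁ f₂ : ZV p, f₁ ∈ WPlus p → f₂ ∈ WPlus p →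
          R11 α β (α 0) (δ 0) f₁ = R11 α β (α 0) (δ 0) f₂ → f₁ = f₂) ∧
        (∀ f₁ f₂ : ZV q, f₁ ∈ WMinus q → f₂ ∈ WMinus q →
          R22 γ δ (α 0) (δ 0) f₁ = R22 γ δ (α 0) (δ 0) f₂ → f₁ = f₂))) ∧
    (∀ g : ZM p q, zl1M g → (∀ j < (0:ℤ), g j = 0) → DEGSol α β γ δ g →
      (∀ h ∈ WPlus p, ∃ f ∈ WPlus p, R11 α β (α 0) (δ 0) f = h) ∧
      (∀ h ∈ WMinus q, ∃ f ∈ WMinus q, R22 γ δ (α 0) (δ 0) f = h) ∧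
      (∀ g' : ZM p q, zl1M g' → (∀ j < (0:ℤ), g' j = 0) → DEGSol α β γ δ g' → g' = g) ∧
      (∀ jc : Fin q,
        R11 α β (α 0) (δ 0) (fun l i => g l i jc) = fun l i => -β l i jc) ∧
      (∀ jc : Fin p,
        R22 γ δ (α 0) (δ 0) (fun l i => zadj g l i jc) = fun l i => -γ l i jc)) := by
  obtain ⟨α, rfl⟩ := Wien.exists_coM hα1
  obtain ⟨β, rfl⟩ := Wien.exists_coM hβ1
  obtain ⟨γ, rfl⟩ := Wien.exists_coM hγ1
  obtain ⟨δ, rfl⟩ := Wien.exists_coM hδ1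
  have hα := Wien.GE_iff.2 hα2
  have hβ := Wien.GE_iff.2 hβ2
  have hγ := Wien.LE_iff.2 hγ2
  have hδ := Wien.LE_iff.2 hδ2
  change IsUnit (Wien.c0 α) at ha₀
  change IsUnit (Wien.c0 δ) at hd₀
  change (_ ↔ _ ∧ (∀ f₁ f₂ : ZV p, _ → _ → R11 _ _ (Wien.c0 α) (Wien.c0 δ) f₁ =
    R11 _ _ (Wien.c0 α) (Wien.c0 δ) f₂ → _) ∧ (∀ f₁ f₂ : ZV q, _ → _ →
    R22 _ _ (Wien.c0 α) (Wien.c0 δ) f₁ = R22 _ _ (Wien.c0 α) (Wien.c0 δ) f₂ → _)) ∧ _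
  refine ⟨⟨?_, ?_⟩, ?_⟩
  · rintro ⟨g, hg1, hg2, hs⟩
    obtain ⟨g, rfl⟩ := Wien.exists_coM hg1
    obtain ⟨h, i1, i2, -⟩ := Wien.of_sol hα hβ hγ hδ ha₀ hd₀ (Wien.GE_iff.2 hg2)
      (Wien.degSol_iff.1 hs)
    refine ⟨Wien.condD1_iff.2 h, fun f₁ f₂ h₁ h₂ e => ?_, fun f₁ f₂ h₁ h₂ e => ?_⟩
    · obtain ⟨F₁, rfl⟩ := Wien.exists_coV h₁.1
      obtain ⟨F₂, rfl⟩ := Wien.exists_coV h₂.1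
      rw [Wien.R11_coV hα hβ, Wien.R11_coV hα hβ] at e
      have := i1 (F₁ - F₂) ((Wien.coV_mem_WPlus.1 h₁).sub (Wien.coV_mem_WPlus.1 h₂))
        (by rw [Wien.T11_sub, Wien.coV_inj e, sub_self])
      rw [sub_eq_zero.1 this]
    · obtain ⟨F₁, rfl⟩ := Wien.exists_coV h₁.1
      obtain ⟨F₂, rfl⟩ := Wien.exists_coV h₂.1
      rw [Wien.R22_coV hγ hδ, Wien.R22_coV hγ hδ] at e
      have := i2 (F₁ - F₂) ((Wien.coV_mem_WMinus.1 h₁).sub (Wien.coV_mem_WMinus.1 h₂))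
        (by rw [Wien.T22_sub, Wien.coV_inj e, sub_self])
      rw [sub_eq_zero.1 this]
  · rintro ⟨h, i1, i2⟩
    obtain ⟨g, hg, s⟩ := Wien.exists_sol hα hβ hγ hδ ha₀ hd₀ (Wien.condD1_iff.1 h)
      (fun F hF h0 => Wien.coV_inj (i1 _ _ (Wien.coV_mem_WPlus.2 hF)
        ((Wien.coV_mem_WPlus (F := 0)).2 fun _ _ _ _ => rfl) (by
          rw [Wien.R11_coV hα hβ, Wien.R11_coV hα hβ, h0, Wien.T11_zero])))
      (fun F hF h0 => Wien.coV_inj (i2 _ _ (Wien.coV_mem_WMinus.2 hF)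
        ((Wien.coV_mem_WMinus (F := 0)).2 fun _ _ _ _ => rfl) (by
          rw [Wien.R22_coV hγ hδ, Wien.R22_coV hγ hδ, h0, Wien.T22_zero])))
    exact ⟨Wien.coM g, Wien.zl1M_coM g, Wien.GE_iff.1 hg, Wien.degSol_iff.2 s⟩
  · intro g hg1 hg2 hs
    obtain ⟨g, rfl⟩ := Wien.exists_coM hg1
    obtain ⟨h, i1, i2, s1, s2, e1, e2⟩ := Wien.of_sol hα hβ hγ hδ ha₀ hd₀ (Wien.GE_iff.2 hg2)
      (Wien.degSol_iff.1 hs)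
    refine ⟨fun f hf => ?_, fun f hf => ?_, fun g' hg1' hg2' hs' => ?_, fun jc => ?_,
      fun jc => ?_⟩
    · obtain ⟨G, rfl⟩ := Wien.exists_coV hf.1
      obtain ⟨F, hF, hFG⟩ := s1 G (Wien.coV_mem_WPlus.1 hf)
      exact ⟨Wien.coV F (), Wien.coV_mem_WPlus.2 hF, (Wien.R11_coV hα hβ _ _ F ()).trans
        (by rw [← hFG]; rfl)⟩
    · obtain ⟨G, rfl⟩ := Wien.exists_coV hf.1
      obtain ⟨F, hF, hFG⟩ := s2 G (Wien.coV_mem_WMinus.1 hf)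
      exact ⟨Wien.coV F (), Wien.coV_mem_WMinus.2 hF, (Wien.R22_coV hγ hδ _ _ F ()).trans
        (by rw [← hFG]; rfl)⟩
    · obtain ⟨g', rfl⟩ := Wien.exists_coM hg1'
      obtain ⟨-, -, -, -, -, e1', -⟩ := Wien.of_sol hα hβ hγ hδ ha₀ hd₀ (Wien.GE_iff.2 hg2')
        (Wien.degSol_iff.1 hs')
      have := i1 (g' - g) ((Wien.GE_iff.2 hg2').sub (Wien.GE_iff.2 hg2))
        (by rw [Wien.T11_sub, e1, e1', sub_self])
      rw [sub_eq_zero.1 this]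
    · refine (Wien.R11_coV hα hβ _ _ g jc).trans ?_
      change Wien.coV (Wien.T11 α β (Wien.c0 α) (Wien.c0 δ) g) jc = _
      rw [e1]
      rfl
    · refine (Wien.R22_coV hγ hδ _ _ gᴴ jc).trans ?_
      change Wien.coV (Wien.T22 γ δ (Wien.c0 α) (Wien.c0 δ) gᴴ) jc = _
      rw [e2]
      rfl
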